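/- For every α > 2, every t > 0, every r ∈ (0, π/2) and z ∈ (-π, π), the heat kernel satisfies p_t(r, z) > 0 together with the Li–Yau type inequality: (∂_r p_t / p_t)² + tan²(r)·(∂_z p_t / p_t)² + (t/α)·(∂_z p_t / p_t)² ≤ ((3α - 1)/(α - 1) - 2t/α) · (∂_t p_t / p_t) + t/α - (3α - 1)/(α - 1) + (3α - 1)²/((α - 2)·t), where all partial derivatives are evaluated at (r, z) (and ∂_t p_t denotes the time derivative, which equals L p_t). -/

import Mathlib

open Real

/-- The Jacobi polynomial `P_k^{0,m}` defined by the Rodrigues-type formula. -/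
noncomputable def jacobiP (k m : ℕ) (x : ℝ) : ℝ :=
  ((-1 : ℝ) ^ k / (2 ^ k * (Nat.factorial k : ℝ) * (1 + x) ^ m)) *
    iteratedDeriv k (fun y : ℝ => (1 + y) ^ m * (1 - y ^ 2) ^ k) x

/-- The general term of the double series defining the subelliptic heat kernel on `SU(2)`. -/
noncomputable def heatTerm (t r z : ℝ) (n : ℤ) (k : ℕ) : ℂ :=
  (((2 * (k : ℝ) + (n.natAbs : ℝ) + 1) *
      Real.exp (-(4 * (k : ℝ) * ((k : ℝ) + (n.natAbs : ℝ) + 1) + 2 * (n.natAbs : ℝ)) * t) *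
      (Real.cos r) ^ n.natAbs * jacobiP k n.natAbs (Real.cos (2 * r)) : ℝ) : ℂ) *
    Complex.exp ((n : ℂ) * (z : ℂ) * Complex.I)

/-- The subelliptic heat kernel `p_t(r,z)` on `SU(2)` in cylindric coordinates
(the double series is real-valued). -/
noncomputable def heatP (t r z : ℝ) : ℝ := (∑' n : ℤ, ∑' k : ℕ, heatTerm t r z n k).re



abbrev SA : Type := MvPolynomial (Fin 4) ℂ

noncomputable def dX : Derivation ℂ SA SA :=
  MvPolynomial.mkDerivation ℂ ![MvPolynomial.X 3, MvPolynomial.X 2, -MvPolynomial.X 1, -MvPolynomial.X 0]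
noncomputable def dY : Derivation ℂ SA SA :=
  MvPolynomial.mkDerivation ℂ ![-(Complex.I • MvPolynomial.X 3), Complex.I • MvPolynomial.X 2,
    Complex.I • MvPolynomial.X 1, -(Complex.I • MvPolynomial.X 0)]
noncomputable def dZ : Derivation ℂ SA SA :=
  MvPolynomial.mkDerivation ℂ ![Complex.I • MvPolynomial.X 0, -(Complex.I • MvPolynomial.X 1),
    Complex.I • MvPolynomial.X 2, -(Complex.I • MvPolynomial.X 3)]
noncomputable def dG : Derivation ℂ SA SA :=
  MvPolynomial.mkDerivation ℂ ![0, 0,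
    Complex.I • MvPolynomial.X 2, -(Complex.I • MvPolynomial.X 3)]
noncomputable def dE : Derivation ℂ SA SA :=
  MvPolynomial.mkDerivation ℂ ![MvPolynomial.X 3, 0, -MvPolynomial.X 1, 0]
noncomputable def dF : Derivation ℂ SA SA :=
  MvPolynomial.mkDerivation ℂ ![0, MvPolynomial.X 2, 0, -MvPolynomial.X 0]

lemma comm_XY (f : SA) : dX (dY f) = dY (dX f) + (2:ℂ) • dZ f := by
  have h : ⁅dX, dY⁆ = (2:ℂ) • dZ := by
    apply MvPolynomial.derivation_ext
    intro i
    fin_cases i <;> simp [Derivation.commutator_apply, dX, dY, dZ, MvPolynomial.mkDerivation_X] <;>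
      module
  have := congrArg (fun D : Derivation ℂ SA SA => D f) h
  simp only [Derivation.commutator_apply, Derivation.smul_apply] at this
  rw [← this]; abel

lemma comm_YZ (f : SA) : dY (dZ f) = dZ (dY f) + (2:ℂ) • dX f := by
  have h : ⁅dY, dZ⁆ = (2:ℂ) • dX := by
    apply MvPolynomial.derivation_ext
    intro i
    fin_cases i <;> simp [Derivation.commutator_apply, dX, dY, dZ, MvPolynomial.mkDerivation_X, smul_smul] <;>
      module
  have := congrArg (fun D : Derivation ℂ SA SA => D f) h
  simp only [Derivation.commutator_apply, Derivation.smul_apply] at this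
  rw [← this]; abel

lemma comm_ZX (f : SA) : dZ (dX f) = dX (dZ f) + (2:ℂ) • dY f := by
  have h : ⁅dZ, dX⁆ = (2:ℂ) • dY := by
    apply MvPolynomial.derivation_ext
    intro i
    fin_cases i <;> simp [Derivation.commutator_apply, dX, dY, dZ, MvPolynomial.mkDerivation_X, smul_smul] <;>
      module
  have := congrArg (fun D : Derivation ℂ SA SA => D f) h
  simp only [Derivation.commutator_apply, Derivation.smul_apply] at this
  rw [← this]; abel

lemma dX_eq (f : SA) : dX f = dE f + dF f := by
  have h : dX = dE + dF := by
    apply MvPolynomial.derivation_ext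
    intro i
    fin_cases i <;> simp [dX, dE, dF, MvPolynomial.mkDerivation_X]
  rw [h]; rfl

lemma dY_eq (f : SA) : dY f = -(Complex.I • dE f) + Complex.I • dF f := by
  have h : dY = -(Complex.I • dE) + Complex.I • dF := by
    apply MvPolynomial.derivation_ext
    intro i
    fin_cases i <;> simp [dY, dE, dF, MvPolynomial.mkDerivation_X]
  rw [h]; rfl

noncomputable def opL (f : SA) : SA := dX (dX f) + dY (dY f)

lemma opL_eq (f : SA) : opL f = (2:ℂ) • (dE (dF f) + dF (dE f)) := by
  unfold opL
  simp only [dX_eq, dY_eq, map_add, map_neg, Derivation.map_smul, smul_add, smul_neg, smul_smul, Complex.I_mul_I,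
    neg_smul, one_smul, two_smul]
  abel

lemma opL_X (f : SA) : opL (dX f) = dX (opL f) - (4:ℂ) • dY (dZ f) + (4:ℂ) • dX f := by
  unfold opL
  have e1 := comm_XY f
  have e2 := comm_XY (dY f)
  have e3 := comm_YZ f
  have e4 : dY (dX f) = dX (dY f) - (2:ℂ) • dZ f := by rw [e1]; abel
  have e5 : dX (dY (dY f)) = dY (dX (dY f)) + (2:ℂ) • dZ (dY f) := e2
  simp only [map_add, e4, e5, map_sub, Derivation.map_smul]
  have e6 : dZ (dY f) = dY (dZ f) - (2:ℂ) • dX f := by rw [e3]; abel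
  rw [e6]
  module

lemma opL_Y (f : SA) : opL (dY f) = dY (opL f) + (4:ℂ) • dX (dZ f) + (4:ℂ) • dY f := by
  unfold opL
  have e1 := comm_XY f
  have e2 := comm_XY (dX f)
  have e3 := comm_ZX f
  simp only [map_add, e1, e2, Derivation.map_smul, e3]
  module

lemma opL_Z (f : SA) : opL (dZ f) = dZ (opL f) := by
  unfold opL
  have e1 : dX (dZ f) = dZ (dX f) - (2:ℂ) • dY f := by rw [comm_ZX f]; abel
  have e2 := comm_YZ f
  have e3 : dX (dZ (dX f)) = dZ (dX (dX f)) - (2:ℂ) • dY (dX f) := by rw [comm_ZX (dX f)]; abel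
  have e4 := comm_YZ (dY f)
  simp only [map_add, e1, e2, Derivation.map_smul, map_sub, e3, e4]
  module

noncomputable def rho : SA := MvPolynomial.X 0 * MvPolynomial.X 1 + MvPolynomial.X 2 * MvPolynomial.X 3

/-- The homogeneous (solid) disk polynomials. -/
noncomputable def phi : ℕ → ℕ → SA
  | a, 0 => MvPolynomial.X 0 ^ a
  | 0, b+1 => MvPolynomial.X 1 ^ (b+1)
  | a+1, b+1 => MvPolynomial.X 0 * phi a (b+1) + MvPolynomial.X 1 * phi (a+1) b - rho * phi a b

lemma phi_a0 (a : ℕ) : phi a 0 = MvPolynomial.X 0 ^ a := by cases a <;> simp [phi]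
lemma phi_0b (b : ℕ) : phi 0 b = MvPolynomial.X 1 ^ b := by cases b <;> simp [phi]
lemma phi_ss (a b : ℕ) : phi (a+1) (b+1) = MvPolynomial.X 0 * phi a (b+1) + MvPolynomial.X 1 * phi (a+1) b - rho * phi a b := by
  rw [phi]

lemma phi_induction (P : ℕ → ℕ → Prop) (h1 : ∀ a, P a 0) (h2 : ∀ b, P 0 b)
    (h3 : ∀ a b, P a b → P a (b+1) → P (a+1) b → P (a+1) (b+1)) : ∀ a b, P a b := by
  intro a
  induction a with
  | zero => exact h2
  | succ a ih =>
    intro b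
    induction b with
    | zero => exact h1 _
    | succ b ihb => exact h3 a b (ih b) (ih (b+1)) ihb

lemma dE_rho : dE rho = 0 := by
  simp [dE, rho, MvPolynomial.mkDerivation_X, Derivation.leibniz]; ring
lemma dF_rho : dF rho = 0 := by
  simp [dF, rho, MvPolynomial.mkDerivation_X, Derivation.leibniz]; ring
lemma dG_rho : dG rho = 0 := by
  simp [dG, rho, MvPolynomial.mkDerivation_X, Derivation.leibniz, mul_comm]

@[simp] lemma dE_0 : dE (MvPolynomial.X 0) = MvPolynomial.X 3 := by simp [dE, MvPolynomial.mkDerivation_X]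
@[simp] lemma dE_1 : dE (MvPolynomial.X 1) = 0 := by simp [dE, MvPolynomial.mkDerivation_X]
@[simp] lemma dE_2 : dE (MvPolynomial.X 2) = -MvPolynomial.X 1 := by simp [dE, MvPolynomial.mkDerivation_X]
@[simp] lemma dE_3 : dE (MvPolynomial.X 3) = 0 := by simp [dE, MvPolynomial.mkDerivation_X]
@[simp] lemma dF_0 : dF (MvPolynomial.X 0) = 0 := by simp [dF, MvPolynomial.mkDerivation_X]
@[simp] lemma dF_1 : dF (MvPolynomial.X 1) = MvPolynomial.X 2 := by simp [dF, MvPolynomial.mkDerivation_X]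
@[simp] lemma dF_2 : dF (MvPolynomial.X 2) = 0 := by simp [dF, MvPolynomial.mkDerivation_X]
@[simp] lemma dF_3 : dF (MvPolynomial.X 3) = -MvPolynomial.X 0 := by simp [dF, MvPolynomial.mkDerivation_X]
@[simp] lemma dG_0 : dG (MvPolynomial.X 0) = 0 := by simp [dG, MvPolynomial.mkDerivation_X]
@[simp] lemma dG_1 : dG (MvPolynomial.X 1) = 0 := by simp [dG, MvPolynomial.mkDerivation_X]

lemma dG_phi (a b : ℕ) : dG (phi a b) = 0 := by
  revert a b
  apply phi_induction
  · intro a; simp [phi_a0, Derivation.leibniz_pow]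
  · intro b; simp [phi_0b, Derivation.leibniz_pow]
  · intro a b h1 h2 h3
    rw [phi_ss]
    simp [Derivation.leibniz, h1, h2, h3, dG_rho]

lemma vF_phi_zero (a : ℕ) : dF (phi a 0) = 0 := by simp [phi_a0, Derivation.leibniz_pow]
lemma vE_phi_zero (b : ℕ) : dE (phi 0 b) = 0 := by simp [phi_0b, Derivation.leibniz_pow]

lemma dE_mul (f g : SA) : dE (f * g) = f * dE g + g * dE f := by simp [Derivation.leibniz]
lemma dF_mul (f g : SA) : dF (f * g) = f * dF g + g * dF f := by simp [Derivation.leibniz]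

lemma vF_phi (a b : ℕ) : MvPolynomial.X 3 * dF (phi a (b+1)) =
    ((b:SA) + 1) * (MvPolynomial.X 1 * phi (a+1) b - phi (a+1) (b+1)) := by
  revert a b
  have key : ∀ a b : ℕ, MvPolynomial.X 3 * dF (phi a b) =
      (b:SA) * (MvPolynomial.X 1 * phi (a+1) (b-1) - phi (a+1) b) := by
    apply phi_induction
    · intro a; simp [vF_phi_zero]
    · intro b
      induction b with
      | zero => simp [vF_phi_zero]
      | succ b ih =>
        have e0 : ∀ b, phi 0 (b+1) = MvPolynomial.X 1 * phi 0 b := by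
          intro b
          rw [phi_0b, phi_0b, pow_succ]; ring
        have e1 := e0 b
        cases b with
        | zero =>
          rw [e1, dF_mul, vF_phi_zero, phi_ss]
          simp [phi_a0, phi_0b, rho]; ring
        | succ b =>
          rw [e1, dF_mul]
          simp only [Nat.add_sub_cancel] at ih ⊢
          have e2 := phi_ss 0 (b+1)
          have e3 := phi_ss 0 b
          have e4 := e0 b
          rw [e1] at e2
          simp only [rho] at e2 e3
          simp only [zero_add, dF_1] at *
          push_cast at *
          linear_combination (MvPolynomial.X 1) * ih + ((b:SA)+2) * e2  - ((b:SA)+1) * MvPolynomial.X 1 * e3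
            - ((b:SA)+1) * (MvPolynomial.X 2 * MvPolynomial.X 3 + MvPolynomial.X 0 * MvPolynomial.X 1) * e4
    · intro a b h1 h2 h3
      have e2 := phi_ss (a+1) b
      rw [phi_ss, map_sub, map_add, dF_mul, dF_mul, dF_mul]
      cases b with
      | zero =>
        simp only [Nat.add_sub_cancel, dF_0, dF_1, dF_rho] at *
        rw [e2]
        simp only [rho] at *
        push_cast at *
        linear_combination (MvPolynomial.X 0) * h2 + MvPolynomial.X 1 * h3 -
          (MvPolynomial.X 0 * MvPolynomial.X 1 + MvPolynomial.X 2 * MvPolynomial.X 3) * h1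
      | succ b =>
        have e3 := phi_ss (a+1) b
        simp only [Nat.add_sub_cancel, dF_0, dF_1, dF_rho] at *
        simp only [rho] at *
        push_cast at *
        linear_combination (MvPolynomial.X 0) * h2 + MvPolynomial.X 1 * h3 -
          (MvPolynomial.X 0 * MvPolynomial.X 1 + MvPolynomial.X 2 * MvPolynomial.X 3) * h1
          + ((b:SA)+2) * e2 - ((b:SA)+1) * MvPolynomial.X 1 * e3
  intro a b
  have := key a (b+1)
  push_cast at this
  simpa using this

/-- Swapping the roles of the two indices: the conjugation symmetry of the disk polynomials. -/
noncomputable def swp : SA →ₐ[ℂ] SA :=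
  MvPolynomial.aeval ![MvPolynomial.X 1, MvPolynomial.X 0, MvPolynomial.X 3, MvPolynomial.X 2]

lemma swp_phi (a b : ℕ) : swp (phi a b) = phi b a := by
  revert a b
  apply phi_induction
  · intro a; rw [phi_a0, phi_0b]; simp [swp]
  · intro a; rw [phi_a0, phi_0b]; simp [swp]
  · intro a b h1 h2 h3
    rw [phi_ss, phi_ss, map_sub, map_add, map_mul, map_mul, map_mul, h1, h2, h3]
    simp [swp, rho]; ring

lemma swp_dF (f : SA) : swp (dF f) = dE (swp f) := by
  induction f using MvPolynomial.induction_on with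
  | C a => simp [swp]
  | add p q hp hq => simp [hp, hq]
  | mul_X p i hp =>
    rw [dF_mul, map_add, map_mul, map_mul, map_mul, hp, dE_mul]
    congr 2
    fin_cases i <;> simp [swp]

lemma vE_phi (a b : ℕ) : MvPolynomial.X 2 * dE (phi (a+1) b) =
    ((a:SA) + 1) * (MvPolynomial.X 0 * phi a (b+1) - phi (a+1) (b+1)) := by
  have h := congrArg swp (vF_phi b a)
  simp only [map_mul, swp_dF, swp_phi, map_add, map_sub, map_natCast, map_one] at h
  simpa [swp] using h

lemma opL_mul (f g : SA) : opL (f * g) = f * opL g + g * opL f +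
    4 * (dE f * dF g + dF f * dE g) := by
  simp only [opL_eq, dE_mul, dF_mul, map_add, two_smul]
  ring

lemma opL_add (f g : SA) : opL (f + g) = opL f + opL g := by
  simp only [opL, map_add]; abel

lemma opL_sub (f g : SA) : opL (f - g) = opL f - opL g := by
  simp only [opL, map_sub]; abel

lemma opL_smul (c : ℂ) (f : SA) : opL (c • f) = c • opL f := by
  simp only [opL, Derivation.map_smul, smul_add]

lemma opL_rho : opL rho = 0 := by simp [opL_eq, dE_rho, dF_rho]
lemma opL_0 : opL (MvPolynomial.X 0) = -2 * MvPolynomial.X 0 := by simp [opL_eq, two_smul]; ring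
lemma opL_1 : opL (MvPolynomial.X 1) = -2 * MvPolynomial.X 1 := by simp [opL_eq, two_smul]; ring

lemma opL_phi (a b : ℕ) : opL (phi a b) = -(4 * (a:SA) * b + 2 * a + 2 * b) * phi a b := by
  revert a b
  apply phi_induction
  · intro a
    induction a with
    | zero => simp [phi_a0, opL]
    | succ a ih =>
      have : phi (a+1) 0 = MvPolynomial.X 0 * phi a 0 := by rw [phi_a0, phi_a0, pow_succ]; ring
      rw [this, opL_mul, ih, opL_0, vF_phi_zero]
      push_cast; simp; ring
  · intro a
    induction a with
    | zero => simp [phi_0b, opL]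
    | succ a ih =>
      have : phi 0 (a+1) = MvPolynomial.X 1 * phi 0 a := by rw [phi_0b, phi_0b, pow_succ]; ring
      rw [this, opL_mul, ih, opL_1, vE_phi_zero]
      push_cast; simp; ring
  · intro a b h1 h2 h3
    have e := phi_ss a b
    have f1 := vF_phi a b
    have f2 := vE_phi a b
    rw [e] at f1 f2
    rw [e, opL_sub, opL_add, opL_mul, opL_mul, opL_mul, h1, h2, h3, opL_0, opL_1, opL_rho, dE_rho, dF_rho]
    simp only [dE_0, dF_0, dE_1, dF_1]
    push_cast
    linear_combination 4 * f1 + 4 * f2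


noncomputable def pt (p : ℂ × ℂ) : Fin 4 → ℂ :=
  ![p.1, (starRingEnd ℂ) p.1, p.2, (starRingEnd ℂ) p.2]

noncomputable def ev (p : ℂ × ℂ) (f : SA) : ℝ := (MvPolynomial.eval (pt p) f).re

lemma ev_add (p : ℂ × ℂ) (f g : SA) : ev p (f + g) = ev p f + ev p g := by simp [ev]
lemma ev_sub (p : ℂ × ℂ) (f g : SA) : ev p (f - g) = ev p f - ev p g := by simp [ev]
lemma ev_smul (p : ℂ × ℂ) (c : ℝ) (f : SA) : ev p ((c:ℂ) • f) = c * ev p f := by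
  rw [ev, MvPolynomial.smul_eval, Complex.re_ofReal_mul]; rfl
lemma ev_smul2 (p : ℂ × ℂ) (f : SA) : ev p ((2:ℂ) • f) = 2 * ev p f := by
  simpa using ev_smul p 2 f
lemma ev_smul4 (p : ℂ × ℂ) (f : SA) : ev p ((4:ℂ) • f) = 4 * ev p f := by
  simpa using ev_smul p 4 f
lemma ev_sum {ι : Type*} (s : Finset ι) (p : ℂ × ℂ) (f : ι → SA) :
    ev p (∑ i ∈ s, f i) = ∑ i ∈ s, ev p (f i) := by
  simp [ev]

lemma ev_continuous (f : SA) : Continuous (fun p => ev p f) := by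
  have h : Continuous (fun p : ℂ × ℂ => MvPolynomial.eval (pt p) f) := by
    apply (MvPolynomial.continuous_eval f).comp
    apply continuous_pi
    intro i
    fin_cases i
    · exact continuous_fst
    · exact Complex.continuous_conj.comp continuous_fst
    · exact continuous_snd
    · exact Complex.continuous_conj.comp continuous_snd
  exact Complex.continuous_re.comp h

lemma curve_deriv (c : ℝ → Fin 4 → ℂ) (s : ℝ) (D : Derivation ℂ SA SA)
    (h : ∀ i, HasDerivAt (fun s => c s i) (MvPolynomial.eval (c s) (D (MvPolynomial.X i))) s) (f : SA) :
    HasDerivAt (fun s => MvPolynomial.eval (c s) f) (MvPolynomial.eval (c s) (D f)) s := by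
  induction f using MvPolynomial.induction_on with
  | C a =>
    have : D (MvPolynomial.C a) = 0 := Derivation.map_algebraMap D a
    simp only [this, MvPolynomial.eval_C, map_zero]
    exact hasDerivAt_const s a
  | add p q hp hq => simpa using hp.fun_add hq
  | mul_X p i hp =>
    have := hp.fun_mul (h i)
    simp only [MvPolynomial.eval_mul, MvPolynomial.eval_X, Derivation.leibniz, smul_eq_mul, map_add]
    refine this.congr_deriv ?_
    ring

lemma deriv_point (c : Fin 4 → ℂ) (D D' : Derivation ℂ SA SA)
    (h : ∀ i, MvPolynomial.eval c (D (MvPolynomial.X i)) = MvPolynomial.eval c (D' (MvPolynomial.X i))) (f : SA) :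
    MvPolynomial.eval c (D f) = MvPolynomial.eval c (D' f) := by
  induction f using MvPolynomial.induction_on with
  | C a =>
    have : D (MvPolynomial.C a) = 0 := Derivation.map_algebraMap D a
    have h2 : D' (MvPolynomial.C a) = 0 := Derivation.map_algebraMap D' a
    rw [this, h2]
  | add p q hp hq => simp [hp, hq]
  | mul_X p i hp =>
    simp [MvPolynomial.eval_mul, Derivation.leibniz, hp, h i]

lemma re_deriv {g : ℝ → ℂ} {g' : ℂ} {s : ℝ} (h : HasDerivAt g g' s) :
    HasDerivAt (fun s => (g s).re) g'.re s := by
  have := (Complex.reCLM.hasFDerivAt (x := g s)).comp_hasDerivAt s h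
  exact this

/-- A curve in the group with its conjugate. -/
lemma ev_curve (γ : ℝ → ℂ × ℂ) (s : ℝ) (D : Derivation ℂ SA SA) (d1 d2 : ℂ)
    (h1 : HasDerivAt (fun s => (γ s).1) d1 s) (h2 : HasDerivAt (fun s => (γ s).2) d2 s)
    (e0 : MvPolynomial.eval (pt (γ s)) (D (MvPolynomial.X 0)) = d1)
    (e1 : MvPolynomial.eval (pt (γ s)) (D (MvPolynomial.X 1)) = (starRingEnd ℂ) d1)
    (e2 : MvPolynomial.eval (pt (γ s)) (D (MvPolynomial.X 2)) = d2)
    (e3 : MvPolynomial.eval (pt (γ s)) (D (MvPolynomial.X 3)) = (starRingEnd ℂ) d2) (f : SA) :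
    HasDerivAt (fun s => ev (γ s) f) (ev (γ s) (D f)) s := by
  have c1 : HasDerivAt (fun s => (starRingEnd ℂ) (γ s).1) ((starRingEnd ℂ) d1) s := by
    have := (Complex.conjCLE.toContinuousLinearMap.hasFDerivAt (x := (γ s).1)).comp_hasDerivAt s h1
    exact this
  have c2 : HasDerivAt (fun s => (starRingEnd ℂ) (γ s).2) ((starRingEnd ℂ) d2) s := by
    have := (Complex.conjCLE.toContinuousLinearMap.hasFDerivAt (x := (γ s).2)).comp_hasDerivAt s h2
    exact this
  apply re_deriv
  apply curve_deriv (fun s => pt (γ s))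
  intro i
  fin_cases i
  · exact h1.congr_deriv e0.symm
  · exact c1.congr_deriv e1.symm
  · exact h2.congr_deriv e2.symm
  · exact c2.congr_deriv e3.symm

noncomputable def flX (p : ℂ × ℂ) (s : ℝ) : ℂ × ℂ :=
  (Real.cos s * p.1 + Real.sin s * (starRingEnd ℂ) p.2, Real.cos s * p.2 - Real.sin s * (starRingEnd ℂ) p.1)
noncomputable def flY (p : ℂ × ℂ) (s : ℝ) : ℂ × ℂ :=
  (Real.cos s * p.1 - Real.sin s * (Complex.I * (starRingEnd ℂ) p.2),
   Real.cos s * p.2 + Real.sin s * (Complex.I * (starRingEnd ℂ) p.1))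

def S3 : Set (ℂ × ℂ) := {p | Complex.normSq p.1 + Complex.normSq p.2 = 1}

lemma flX_zero (p : ℂ × ℂ) : flX p 0 = p := by simp [flX]
lemma flY_zero (p : ℂ × ℂ) : flY p 0 = p := by simp [flY]
lemma flX_mem {p : ℂ × ℂ} (hp : p ∈ S3) (s : ℝ) : flX p s ∈ S3 := by
  simp only [S3, Set.mem_ofPred_eq, flX, Complex.normSq_apply] at *
  simp [-Complex.ofReal_cos, -Complex.ofReal_sin]
  linear_combination (Real.cos s ^ 2 + Real.sin s ^ 2) * hp + Real.sin_sq_add_cos_sq s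
lemma flY_mem {p : ℂ × ℂ} (hp : p ∈ S3) (s : ℝ) : flY p s ∈ S3 := by
  simp only [S3, Set.mem_ofPred_eq, flY, Complex.normSq_apply] at *
  simp [-Complex.ofReal_cos, -Complex.ofReal_sin]
  linear_combination (Real.cos s ^ 2 + Real.sin s ^ 2) * hp + Real.sin_sq_add_cos_sq s

lemma isCompact_S3 : IsCompact S3 := by
  apply Metric.isCompact_of_isClosed_isBounded
  · apply isClosed_eq _ continuous_const
    exact (Complex.continuous_normSq.comp continuous_fst).add (Complex.continuous_normSq.comp continuous_snd)
  · apply (Metric.isBounded_closedBall (x := (0 : ℂ × ℂ)) (r := 1)).subset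
    intro p hp
    simp only [S3, Set.mem_ofPred_eq, Complex.normSq_eq_norm_sq] at hp
    rw [mem_closedBall_zero_iff, Prod.norm_def, max_le_iff]
    constructor <;> nlinarith [norm_nonneg p.1, norm_nonneg p.2, sq_nonneg ‖p.1‖, sq_nonneg ‖p.2‖]

lemma cos_cx (c : ℂ) (s : ℝ) : HasDerivAt (fun s : ℝ => (Real.cos s : ℂ) * c) (-(Real.sin s : ℂ) * c) s := by
  have := ((Real.hasDerivAt_cos s).ofReal_comp).mul_const c
  simpa using this
lemma sin_cx (c : ℂ) (s : ℝ) : HasDerivAt (fun s : ℝ => (Real.sin s : ℂ) * c) ((Real.cos s : ℂ) * c) s := by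
  have := ((Real.hasDerivAt_sin s).ofReal_comp).mul_const c
  simpa using this

lemma ev_flX (p : ℂ × ℂ) (f : SA) (s : ℝ) :
    HasDerivAt (fun s => ev (flX p s) f) (ev (flX p s) (dX f)) s := by
  apply ev_curve (flX p) s dX _ _ ((cos_cx p.1 s).add (sin_cx _ s)) ((cos_cx p.2 s).sub (sin_cx _ s)) <;>
  simp [dX, pt, flX, MvPolynomial.mkDerivation_X, -Complex.ofReal_cos, -Complex.ofReal_sin] <;> ring

lemma ev_flY (p : ℂ × ℂ) (f : SA) (s : ℝ) :
    HasDerivAt (fun s => ev (flY p s) f) (ev (flY p s) (dY f)) s := by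
  apply ev_curve (flY p) s dY _ _ ((cos_cx p.1 s).sub (sin_cx _ s)) ((cos_cx p.2 s).add (sin_cx _ s)) <;>
  simp [dY, pt, flY, MvPolynomial.mkDerivation_X, MvPolynomial.smul_eval, -Complex.ofReal_cos, -Complex.ofReal_sin] <;> ring_nf <;>
  simp [-Complex.ofReal_cos, -Complex.ofReal_sin] <;> ring

/-- `g` is differentiable everywhere, with second derivative `c` at `0`. -/
def TwoJet (g : ℝ → ℝ) (c : ℝ) : Prop :=
  ∃ g1 : ℝ → ℝ, (∀ s, HasDerivAt g (g1 s) s) ∧ HasDerivAt g1 c 0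

lemma TwoJet.add {f g : ℝ → ℝ} {c d : ℝ} (hf : TwoJet f c) (hg : TwoJet g d) :
    TwoJet (fun s => f s + g s) (c + d) := by
  obtain ⟨f1, h1, h2⟩ := hf
  obtain ⟨g1, k1, k2⟩ := hg
  exact ⟨fun s => f1 s + g1 s, fun s => (h1 s).add (k1 s), h2.add k2⟩

lemma TwoJet.const_mul {f : ℝ → ℝ} {c : ℝ} (a : ℝ) (hf : TwoJet f c) :
    TwoJet (fun s => a * f s) (a * c) := by
  obtain ⟨f1, h1, h2⟩ := hf
  exact ⟨fun s => a * f1 s, fun s => (h1 s).const_mul a, h2.const_mul a⟩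

lemma TwoJet.add_const {f : ℝ → ℝ} {c : ℝ} (a : ℝ) (hf : TwoJet f c) :
    TwoJet (fun s => f s + a) c := by
  obtain ⟨f1, h1, h2⟩ := hf
  exact ⟨f1, fun s => (h1 s).add_const a, h2⟩

lemma TwoJet.sq_div {f u f1 u1 : ℝ → ℝ} {f2 u2 : ℝ} (hf : ∀ s, HasDerivAt f (f1 s) s)
    (hf1 : HasDerivAt f1 f2 0) (hu : ∀ s, HasDerivAt u (u1 s) s) (hu1 : HasDerivAt u1 u2 0)
    (hpos : ∀ s, 0 < u s) :
    TwoJet (fun s => f s ^ 2 / u s)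
      (2 / u 0 * (f1 0 - f 0 * u1 0 / u 0) ^ 2 + 2 * f 0 * f2 / u 0 - f 0 ^ 2 * u2 / u 0 ^ 2) := by
  refine ⟨fun s => (2 * f s * f1 s * u s - f s ^ 2 * u1 s) / u s ^ 2, fun s => ?_, ?_⟩
  · have := ((hf s).fun_pow 2).fun_div (hu s) (hpos s).ne'
    simpa using this
  · have h0 := (hpos 0).ne'
    have := (((((hf 0).const_mul 2).mul hf1).mul (hu 0)).sub (((hf 0).pow 2).mul hu1)).div ((hu 0).pow 2)
      (pow_ne_zero 2 h0)
    refine this.congr_deriv ?_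
    simp
    field_simp
    ring

lemma TwoJet.nonpos {g : ℝ → ℝ} {c : ℝ} (hg : TwoJet g c) (hmax : ∀ s, g s ≤ g 0) : c ≤ 0 := by
  obtain ⟨g1, h1, h2⟩ := hg
  have hd : deriv g = g1 := funext fun s => (h1 s).deriv
  by_contra hc
  push Not at hc
  have hlm : IsLocalMax g 0 := Filter.Eventually.of_forall hmax
  have h0 : deriv g 0 = 0 := hlm.deriv_eq_zero
  have hmin : IsLocalMin g 0 := by
    apply isLocalMin_of_deriv_deriv_pos _ h0 (h1 0).continuousAt
    rw [hd, h2.deriv]; exact hc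
  have hconst : g =ᶠ[nhds 0] fun _ => g 0 := by
    filter_upwards [hmin] with s hs
    exact le_antisymm (hmax s) hs
  have : deriv (deriv g) 0 = 0 := by
    have := hconst.deriv.deriv_eq
    simpa using this
  rw [hd, h2.deriv] at this
  linarith

/-- Parabolic maximum principle on the sphere. -/
lemma max_principle (T : ℝ) (H : ℝ → ℂ × ℂ → ℝ)
    (hcont : ContinuousOn (fun q : ℝ × (ℂ × ℂ) => H q.1 q.2) (Set.Icc 0 T ×ˢ S3))
    (h0 : ∀ p ∈ S3, H 0 p ≤ 0)
    (hsub : ∀ t, 0 < t → t ≤ T → ∀ p ∈ S3, ∃ dt cx cy : ℝ, HasDerivAt (fun t => H t p) dt t ∧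
      TwoJet (fun s => H t (flX p s)) cx ∧ TwoJet (fun s => H t (flY p s)) cy ∧ dt ≤ cx + cy) :
    ∀ t, 0 ≤ t → t ≤ T → ∀ p ∈ S3, H t p ≤ 0 := by
  intro t0 ht0 htT p0 hp0
  by_contra hpos
  push Not at hpos
  set ε := H t0 p0 / (2 * (1 + t0)) with hε
  have hεpos : 0 < ε := by positivity
  have hεm : ε * (1 + t0) = H t0 p0 / 2 := by rw [hε]; field_simp
  have hK : IsCompact (Set.Icc 0 t0 ×ˢ S3) := isCompact_Icc.prod isCompact_S3
  have hc : ContinuousOn (fun q : ℝ × (ℂ × ℂ) => H q.1 q.2 - ε * (1 + q.1)) (Set.Icc 0 t0 ×ˢ S3) := by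
    apply ContinuousOn.sub
    · exact hcont.mono (Set.prod_mono (Set.Icc_subset_Icc_right htT) subset_rfl)
    · fun_prop
  obtain ⟨⟨t1, p1⟩, ⟨ht1, hp1⟩, hmax⟩ := hK.exists_isMaxOn ⟨(t0, p0), ⟨⟨ht0, le_rfl⟩, hp0⟩⟩ hc
  simp only at ht1 hp1
  have hmax' : ∀ t ∈ Set.Icc 0 t0, ∀ p ∈ S3, H t p - ε * (1 + t) ≤ H t1 p1 - ε * (1 + t1) :=
    fun t ht p hp => hmax (a := (t, p)) ⟨ht, hp⟩
  have hge := hmax' t0 ⟨ht0, le_rfl⟩ p0 hp0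
  have ht1pos : 0 < t1 := by
    rcases ht1.1.lt_or_eq with h | h
    · exact h
    · exfalso
      rw [← h] at hge
      have := h0 p1 hp1
      nlinarith
  obtain ⟨dt, cx, cy, hdt, hcx, hcy, hle⟩ := hsub t1 ht1pos (ht1.2.trans htT) p1 hp1
  have c1 : cx ≤ 0 := by
    apply hcx.nonpos
    intro s
    have := hmax' t1 ht1 (flX p1 s) (flX_mem hp1 s)
    rw [flX_zero]; linarith
  have c2 : cy ≤ 0 := by
    apply hcy.nonpos
    intro s
    have := hmax' t1 ht1 (flY p1 s) (flY_mem hp1 s)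
    rw [flY_zero]; linarith
  have hd2 : HasDerivAt (fun t => H t p1 - ε * (1 + t)) (dt - ε) t1 := by
    have := hdt.fun_sub (((hasDerivAt_id t1).const_add 1).const_mul ε)
    simpa using this
  have c3 : 0 ≤ dt - ε := by
    have hl : Filter.Tendsto (slope (fun t => H t p1 - ε * (1 + t)) t1) (nhdsWithin t1 (Set.Iio t1)) (nhds (dt - ε)) :=
      (hasDerivAt_iff_tendsto_slope.mp hd2).mono_left (nhdsWithin_mono _ (fun x hx => ne_of_lt hx))
    apply ge_of_tendsto hl
    have : Set.Ioo 0 t1 ∈ nhdsWithin t1 (Set.Iio t1) := Ioo_mem_nhdsLT ht1pos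
    filter_upwards [this] with x hx
    have := hmax' x ⟨hx.1.le, hx.2.le.trans ht1.2⟩ p1 hp1
    rw [slope_def_field]
    apply div_nonneg_of_nonpos
    · linarith
    · linarith [hx.2]
  linarith


noncomputable def lam (i : ℕ × ℕ) : ℝ := 4 * (i.1:ℝ) * i.2 + 2 * i.1 + 2 * i.2

noncomputable def sol (F : Finset (ℕ × ℕ)) (c : ℕ × ℕ → ℝ) (t : ℝ) : SA :=
  ∑ i ∈ F, ((c i * Real.exp (-lam i * t) : ℝ) : ℂ) • phi i.1 i.2

noncomputable def opLl : SA →ₗ[ℂ] SA where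
  toFun := opL
  map_add' := opL_add
  map_smul' := opL_smul

lemma opL_phi' (i : ℕ × ℕ) : opL (phi i.1 i.2) = ((-lam i : ℝ) : ℂ) • phi i.1 i.2 := by
  rw [opL_phi, MvPolynomial.smul_eq_C_mul]
  congr 1
  have e2 : (MvPolynomial.C (2:ℂ) : SA) = 2 := map_ofNat _ 2
  have e4 : (MvPolynomial.C (4:ℂ) : SA) = 4 := map_ofNat _ 4
  simp [lam, e2, e4]

lemma ev_sol (F : Finset (ℕ × ℕ)) (c : ℕ × ℕ → ℝ) (D : SA →ₗ[ℂ] SA) (p : ℂ × ℂ) (t : ℝ) :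
    ev p (D (sol F c t)) = ∑ i ∈ F, c i * Real.exp (-lam i * t) * ev p (D (phi i.1 i.2)) := by
  rw [sol, map_sum, ev_sum]
  refine Finset.sum_congr rfl fun i _ => ?_
  rw [map_smul, ev_smul]

lemma ev_opL_sol (F : Finset (ℕ × ℕ)) (c : ℕ × ℕ → ℝ) (D : SA →ₗ[ℂ] SA) (p : ℂ × ℂ) (t : ℝ) :
    ev p (D (opL (sol F c t))) = ∑ i ∈ F, c i * (-lam i * Real.exp (-lam i * t)) * ev p (D (phi i.1 i.2)) := by
  have := ev_sol F c (D.comp opLl) p t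
  rw [LinearMap.comp_apply] at this
  change ev p (D (opL (sol F c t))) = _ at this
  rw [this]
  refine Finset.sum_congr rfl fun i _ => ?_
  rw [LinearMap.comp_apply]
  change _ * ev p (D (opL _)) = _
  rw [opL_phi', map_smul, ev_smul]; ring

lemma sol_time (F : Finset (ℕ × ℕ)) (c : ℕ × ℕ → ℝ) (D : SA →ₗ[ℂ] SA) (p : ℂ × ℂ) (t : ℝ) :
    HasDerivAt (fun t => ev p (D (sol F c t))) (ev p (D (opL (sol F c t)))) t := by
  simp only [ev_sol, ev_opL_sol]
  apply HasDerivAt.fun_sum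
  intro i _
  have h1 : HasDerivAt (fun t => -lam i * t) (-lam i) t := by
    simpa using (hasDerivAt_id t).const_mul (-lam i)
  refine ((h1.exp.const_mul (c i)).mul_const _).congr_deriv ?_
  ring

lemma sol_cont (F : Finset (ℕ × ℕ)) (c : ℕ × ℕ → ℝ) (D : SA →ₗ[ℂ] SA) :
    Continuous (fun q : ℝ × (ℂ × ℂ) => ev q.2 (D (sol F c q.1))) := by
  simp only [ev_sol]
  apply continuous_finsetSum
  intro i _
  apply Continuous.mul
  · fun_prop
  · exact (ev_continuous _).comp continuous_snd

lemma ev_opL (p : ℂ × ℂ) (f : SA) : ev p (opL f) = ev p (dX (dX f)) + ev p (dY (dY f)) := ev_add _ _ _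

lemma jetX (p : ℂ × ℂ) (f : SA) : TwoJet (fun s => ev (flX p s) f) (ev p (dX (dX f))) := by
  refine ⟨_, fun s => ev_flX p f s, ?_⟩
  have := ev_flX p (dX f) 0
  rwa [flX_zero] at this
lemma jetY (p : ℂ × ℂ) (f : SA) : TwoJet (fun s => ev (flY p s) f) (ev p (dY (dY f))) := by
  refine ⟨_, fun s => ev_flY p f s, ?_⟩
  have := ev_flY p (dY f) 0
  rwa [flY_zero] at this

lemma jetX_sq (p : ℂ × ℂ) (hp : p ∈ S3) (u f : SA) (hu : ∀ p ∈ S3, 0 < ev p u) :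
    TwoJet (fun s => ev (flX p s) f ^ 2 / ev (flX p s) u)
      (2 / ev p u * (ev p (dX f) - ev p f * ev p (dX u) / ev p u) ^ 2 + 2 * ev p f * ev p (dX (dX f)) / ev p u
        - ev p f ^ 2 * ev p (dX (dX u)) / ev p u ^ 2) := by
  have := TwoJet.sq_div (fun s => ev_flX p f s) (ev_flX p (dX f) 0) (fun s => ev_flX p u s) (ev_flX p (dX u) 0)
    (fun s => hu _ (flX_mem hp s))
  simpa only [flX_zero] using this
lemma jetY_sq (p : ℂ × ℂ) (hp : p ∈ S3) (u f : SA) (hu : ∀ p ∈ S3, 0 < ev p u) :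
    TwoJet (fun s => ev (flY p s) f ^ 2 / ev (flY p s) u)
      (2 / ev p u * (ev p (dY f) - ev p f * ev p (dY u) / ev p u) ^ 2 + 2 * ev p f * ev p (dY (dY f)) / ev p u
        - ev p f ^ 2 * ev p (dY (dY u)) / ev p u ^ 2) := by
  have := TwoJet.sq_div (fun s => ev_flY p f s) (ev_flY p (dY f) 0) (fun s => ev_flY p u s) (ev_flY p (dY u) 0)
    (fun s => hu _ (flY_mem hp s))
  simpa only [flY_zero] using this

lemma sol_pos (F : Finset (ℕ × ℕ)) (c : ℕ × ℕ → ℝ) (h : ∀ p ∈ S3, 0 < ev p (sol F c 0)) (t : ℝ) (ht : 0 ≤ t) :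
    ∀ p ∈ S3, 0 < ev p (sol F c t) := by
  intro p hp
  obtain ⟨p1, hp1, hmin⟩ := isCompact_S3.exists_isMinOn ⟨p, hp⟩ (ev_continuous (sol F c 0)).continuousOn
  have := max_principle t (fun t p => (-1) * ev p (sol F c t) + ev p1 (sol F c 0)) ?_ ?_ ?_ t ht le_rfl p hp
  · linarith [h p1 hp1]
  · have := sol_cont F c LinearMap.id
    exact ((this.const_mul (-1)).add continuous_const).continuousOn
  · intro p hp
    have : ev p1 (sol F c 0) ≤ ev p (sol F c 0) := hmin hp
    linarith
  · intro t _ _ p hp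
    refine ⟨(-1) * ev p (opL (sol F c t)), _, _, ((sol_time F c LinearMap.id p t).const_mul (-1)).add_const _,
      ((jetX p _).const_mul (-1)).add_const _, ((jetY p _).const_mul (-1)).add_const _, ?_⟩
    rw [ev_opL]; linarith

lemma bochner_alg (k m δ u x y ζ l h11 h12 h21 h22 k1 k2 M : ℝ) (hk : 0 < k)
    (hδ8 : δ ≤ 8) (hM : M = m + δ)
    (hl : l * u = (h11 + h22) * u + (x ^ 2 + y ^ 2)) (hz : h12 - h21 = 2 * ζ) :
    (M - 2 / k) * (x ^ 2 + y ^ 2) + 4 * ζ ^ 2 - m * (l * u) - m ^ 2 / 4 * u ^ 2 + 8 * (x * k2 - y * k1)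
      - 8 * (x ^ 2 + y ^ 2) - 2 * (h11 ^ 2 + h12 ^ 2 + h21 ^ 2 + h22 ^ 2) - 8 * k * (k1 ^ 2 + k2 ^ 2) ≤ 0 := by
  have e : 8 * (x * k2 - y * k1) - 8 * k * (k1 ^ 2 + k2 ^ 2) =
      2 / k * (x ^ 2 + y ^ 2) - 8 * k * ((k2 - x / (2 * k)) ^ 2 + (k1 + y / (2 * k)) ^ 2) := by
    field_simp; ring
  have e2 : 0 ≤ 8 * k * ((k2 - x / (2 * k)) ^ 2 + (k1 + y / (2 * k)) ^ 2) := by positivity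
  have e3 : ζ = (h12 - h21) / 2 := by linarith
  rw [hl, e3, hM]
  nlinarith [sq_nonneg (h11 + h22 + m * u / 2), sq_nonneg (h11 - h22), sq_nonneg (h12 + h21),
    mul_nonneg (sub_nonneg.mpr hδ8) (add_nonneg (sq_nonneg x) (sq_nonneg y))]

lemma liYau (F : Finset (ℕ × ℕ)) (c : ℕ × ℕ → ℝ) (h : ∀ p ∈ S3, 0 < ev p (sol F c 0))
    (α δ : ℝ) (hα : 2 < α) (hδ8 : δ ≤ 8) (t : ℝ) (ht : 0 < t) (p : ℂ × ℂ) (hp : p ∈ S3) :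
    ev p (dX (sol F c t)) ^ 2 + ev p (dY (sol F c t)) ^ 2 + 4 * t / α * ev p (dZ (sol F c t)) ^ 2 ≤
      ((3 * α - 1) / (α - 1) - δ * t / α) * ev p (opL (sol F c t)) * ev p (sol F c t) +
      (δ ^ 2 * t / (4 * α) - δ * ((3 * α - 1) / (α - 1)) / 2 + (3 * α - 1) ^ 2 / (4 * (α - 2) * t)) *
        ev p (sol F c t) ^ 2 := by
  have hpos := sol_pos F c h
  set A := (3 * α - 1) / (α - 1) with hA
  set C := (3 * α - 1) ^ 2 / (α - 2) with hC
  let fa : ℝ → ℝ := fun t => t ^ (α - 1)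
  let fb : ℝ → ℝ := fun t => 4 / α * t ^ α
  let fc : ℝ → ℝ := fun t => A * t ^ (α - 1) - δ / α * t ^ α
  let fd : ℝ → ℝ := fun t => δ ^ 2 / (4 * α) * t ^ α - δ * A / 2 * t ^ (α - 1) + C / 4 * t ^ (α - 2)
  let H : ℝ → ℂ × ℂ → ℝ := fun t p =>
    fa t * (ev p (dX (sol F c t)) ^ 2 / ev p (sol F c t)) + fa t * (ev p (dY (sol F c t)) ^ 2 / ev p (sol F c t))
    + fb t * (ev p (dZ (sol F c t)) ^ 2 / ev p (sol F c t)) + (-fc t) * ev p (opL (sol F c t))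
    + (-fd t) * ev p (sol F c t)
  have ca : ∀ e : ℝ, 0 < e → Continuous (fun t : ℝ => t ^ e) := fun e he => Real.continuous_rpow_const he.le
  have ca0 := ca α (by linarith)
  have ca1 := ca (α - 1) (by linarith)
  have ca2 := ca (α - 2) (by linarith)
  have main := max_principle t H ?_ ?_ ?_ t ht.le le_rfl p hp
  · -- conclude
    have hu := hpos t ht.le p hp
    set u := ev p (sol F c t)
    have e0 : t ^ α = t ^ (α - 1) * t := by
      rw [← Real.rpow_add_one ht.ne']; ring_nf
    have e2 : t ^ (α - 2) = t ^ (α - 1) / t := by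
      rw [← Real.rpow_sub_one ht.ne']; ring_nf
    have hq : 0 < t ^ (α - 1) := Real.rpow_pos_of_pos ht _
    simp only [H, fa, fb, fc, fd, e0, e2] at main
    set q := t ^ (α - 1)
    have hα0 : α ≠ 0 := by linarith
    have hα2 : α - 2 ≠ 0 := by linarith
    have key : (ev p (dX (sol F c t)) ^ 2 + ev p (dY (sol F c t)) ^ 2 + 4 * t / α * ev p (dZ (sol F c t)) ^ 2) -
      ((A - δ * t / α) * ev p (opL (sol F c t)) * u +
      (δ ^ 2 * t / (4 * α) - δ * A / 2 + (3 * α - 1) ^ 2 / (4 * (α - 2) * t)) * u ^ 2) =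
      (u / q) * (q * (ev p (dX (sol F c t)) ^ 2 / u) + q * (ev p (dY (sol F c t)) ^ 2 / u)
    + 4 / α * (q * t) * (ev p (dZ (sol F c t)) ^ 2 / u) + (-(A * q - δ / α * (q * t))) * ev p (opL (sol F c t))
    + (-(δ ^ 2 / (4 * α) * (q * t) - δ * A / 2 * q + C / 4 * (q / t))) * u) := by
      rw [hC]
      field_simp
      ring
    have : (u / q) * (q * (ev p (dX (sol F c t)) ^ 2 / u) + q * (ev p (dY (sol F c t)) ^ 2 / u)
    + 4 / α * (q * t) * (ev p (dZ (sol F c t)) ^ 2 / u) + (-(A * q - δ / α * (q * t))) * ev p (opL (sol F c t))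
    + (-(δ ^ 2 / (4 * α) * (q * t) - δ * A / 2 * q + C / 4 * (q / t))) * u) ≤ 0 :=
      mul_nonpos_of_nonneg_of_nonpos (by positivity) main
    linarith
  · have c0 := (sol_cont F c LinearMap.id).continuousOn (s := Set.Icc 0 t ×ˢ S3)
    have c1 := (sol_cont F c (dX : SA →ₗ[ℂ] SA)).continuousOn (s := Set.Icc 0 t ×ˢ S3)
    have c2 := (sol_cont F c (dY : SA →ₗ[ℂ] SA)).continuousOn (s := Set.Icc 0 t ×ˢ S3)
    have c3 := (sol_cont F c (dZ : SA →ₗ[ℂ] SA)).continuousOn (s := Set.Icc 0 t ×ˢ S3)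
    have c4 := (sol_cont F c opLl).continuousOn (s := Set.Icc 0 t ×ˢ S3)
    have hne : ∀ q ∈ Set.Icc 0 t ×ˢ S3, ev q.2 (sol F c q.1) ≠ 0 := fun q hq => (hpos q.1 hq.1.1 q.2 hq.2).ne'
    have f1 : Continuous (fun q : ℝ × (ℂ × ℂ) => fa q.1) := by simp only [fa]; fun_prop
    have f2 : Continuous (fun q : ℝ × (ℂ × ℂ) => fb q.1) := by simp only [fb]; fun_prop
    have f3 : Continuous (fun q : ℝ × (ℂ × ℂ) => fc q.1) := by simp only [fc]; fun_prop
    have f4 : Continuous (fun q : ℝ × (ℂ × ℂ) => fd q.1) := by simp only [fd]; fun_prop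
    exact ((((f1.continuousOn.mul ((c1.pow 2).div c0 hne)).add (f1.continuousOn.mul ((c2.pow 2).div c0 hne))).add
      (f2.continuousOn.mul ((c3.pow 2).div c0 hne))).add (f3.continuousOn.neg.mul c4)).add (f4.continuousOn.neg.mul c0)
  · intro p _
    have z0 : (0:ℝ) ^ α = 0 := Real.zero_rpow (by linarith)
    have z1 : (0:ℝ) ^ (α - 1) = 0 := Real.zero_rpow (by linarith)
    have z2 : (0:ℝ) ^ (α - 2) = 0 := Real.zero_rpow (by linarith)
    simp [H, fa, fb, fc, fd, z0, z1, z2]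
  · clear ht
    intro τ ht hle p hp
    have hu := hpos τ ht.le
    have hup := hu p hp
    have hα0 : α ≠ 0 := by linarith
    have hα1 : α - 1 ≠ 0 := by linarith
    have hα2 : α - 2 ≠ 0 := by linarith
    have hq : 0 < τ ^ (α - 1) := Real.rpow_pos_of_pos ht _
    have e1 : τ ^ (α - 1 - 1) = τ ^ (α - 1) / τ := by
      rw [← Real.rpow_sub_one ht.ne']
    have e2 : τ ^ (α - 2 - 1) = τ ^ (α - 1) / τ ^ 2 := by
      rw [show α - 2 - 1 = (α - 1) - 1 - 1 by ring, Real.rpow_sub_one ht.ne', Real.rpow_sub_one ht.ne']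
      field_simp
    have r0 := Real.hasDerivAt_rpow_const (x := τ) (p := α) (Or.inl ht.ne')
    have r1 := Real.hasDerivAt_rpow_const (x := τ) (p := α - 1) (Or.inl ht.ne')
    have r2 := Real.hasDerivAt_rpow_const (x := τ) (p := α - 2) (Or.inl ht.ne')
    have da := r1
    have db := r0.const_mul (4 / α)
    have dc := (r1.const_mul A).fun_sub (r0.const_mul (δ / α))
    have dd := ((r0.const_mul (δ ^ 2 / (4 * α))).fun_sub (r1.const_mul (δ * A / 2))).fun_add (r2.const_mul (C / 4))
    have s0 := sol_time F c LinearMap.id p τ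
    have s1 := sol_time F c (dX : SA →ₗ[ℂ] SA) p τ
    have s2 := sol_time F c (dY : SA →ₗ[ℂ] SA) p τ
    have s3 := sol_time F c (dZ : SA →ₗ[ℂ] SA) p τ
    have s4 := sol_time F c opLl p τ
    have hD := ((((da.fun_mul ((s1.fun_pow 2).fun_div s0 hup.ne')).fun_add
      (da.fun_mul ((s2.fun_pow 2).fun_div s0 hup.ne'))).fun_add
      (db.fun_mul ((s3.fun_pow 2).fun_div s0 hup.ne'))).fun_add (dc.fun_neg.fun_mul s4)).fun_add (dd.fun_neg.fun_mul s0)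
    refine ⟨_, _, _, hD,
      (((((jetX_sq p hp _ _ hu).const_mul (fa τ)).add ((jetX_sq p hp _ _ hu).const_mul (fa τ))).add
        ((jetX_sq p hp _ _ hu).const_mul (fb τ))).add ((jetX p _).const_mul (-fc τ))).add ((jetX p _).const_mul (-fd τ)),
      (((((jetY_sq p hp _ _ hu).const_mul (fa τ)).add ((jetY_sq p hp _ _ hu).const_mul (fa τ))).add
        ((jetY_sq p hp _ _ hu).const_mul (fb τ))).add ((jetY p _).const_mul (-fc τ))).add ((jetY p _).const_mul (-fd τ)), ?_⟩
    simp only [LinearMap.id_apply, Derivation.coeFn_coe]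
    have w4 : ev p (opLl (opL (sol F c τ))) = ev p (dX (dX (opL (sol F c τ)))) + ev p (dY (dY (opL (sol F c τ)))) :=
      ev_opL _ _
    have w4' : ev p (opLl (sol F c τ)) = ev p (opL (sol F c τ)) := rfl
    have w0 := ev_opL p (sol F c τ)
    have w1 : ev p (dX (opL (sol F c τ))) = ev p (dX (dX (dX (sol F c τ)))) + ev p (dY (dY (dX (sol F c τ))))
        + 4 * ev p (dY (dZ (sol F c τ))) - 4 * ev p (dX (sol F c τ)) := by
      have := congrArg (ev p) (opL_X (sol F c τ))
      rw [ev_opL, ev_add, ev_sub, ev_smul4, ev_smul4] at this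
      linarith
    have w2 : ev p (dY (opL (sol F c τ))) = ev p (dX (dX (dY (sol F c τ)))) + ev p (dY (dY (dY (sol F c τ))))
        - 4 * ev p (dX (dZ (sol F c τ))) - 4 * ev p (dY (sol F c τ)) := by
      have := congrArg (ev p) (opL_Y (sol F c τ))
      rw [ev_opL, ev_add, ev_add, ev_smul4, ev_smul4] at this
      linarith
    have w3 : ev p (dZ (opL (sol F c τ))) = ev p (dX (dX (dZ (sol F c τ)))) + ev p (dY (dY (dZ (sol F c τ)))) := by
      have := congrArg (ev p) (opL_Z (sol F c τ))
      rw [ev_opL] at this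
      linarith
    have w5 : ev p (dX (dY (sol F c τ))) - ev p (dY (dX (sol F c τ))) = 2 * ev p (dZ (sol F c τ)) := by
      have := congrArg (ev p) (comm_XY (sol F c τ))
      rw [ev_add, ev_smul2] at this
      linarith
    rw [w4, w4', w1, w2, w3]
    have e0 : τ ^ α = τ ^ (α - 1) * τ := by
      rw [← Real.rpow_add_one ht.ne']; ring_nf
    have e3 : τ ^ (α - 2) = τ ^ (α - 1) / τ := by
      rw [← Real.rpow_sub_one ht.ne']; ring_nf
    simp only [fa, fb, fc, fd]
    rw [e1, e2, e0, e3]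
    generalize ev p (opL (sol F c τ)) = l at *
    generalize ev p (dX (dX (opL (sol F c τ)))) = l1 at *
    generalize ev p (dY (dY (opL (sol F c τ)))) = l2 at *
    generalize ev p (dX (dX (dX (sol F c τ)))) = g1 at *
    generalize ev p (dY (dY (dX (sol F c τ)))) = g2 at *
    generalize ev p (dX (dX (dY (sol F c τ)))) = g3 at *
    generalize ev p (dY (dY (dY (sol F c τ)))) = g4 at *
    generalize ev p (dX (dX (dZ (sol F c τ)))) = g5 at *
    generalize ev p (dY (dY (dZ (sol F c τ)))) = g6 at *
    generalize ev p (dX (dX (sol F c τ))) = xx at *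
    generalize ev p (dX (dY (sol F c τ))) = xy at *
    generalize ev p (dY (dX (sol F c τ))) = yx at *
    generalize ev p (dY (dY (sol F c τ))) = yy at *
    generalize ev p (dX (dZ (sol F c τ))) = xz at *
    generalize ev p (dY (dZ (sol F c τ))) = yz at *
    generalize ev p (dX (sol F c τ)) = x at *
    generalize ev p (dY (sol F c τ)) = y at *
    generalize ev p (dZ (sol F c τ)) = ζ at *
    generalize ev p (sol F c τ) = u at *
    generalize τ ^ (α - 1) = q at *
    have hb := bochner_alg (τ / α) ((3 * α - 1) / τ - δ) δ u x y ζ l (xx - x * x / u) (xy - y * x / u)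
      (yx - x * y / u) (yy - y * y / u) (xz - ζ * x / u) (yz - ζ * y / u) ((3 * α - 1) / τ)
      (by apply div_pos <;> linarith) hδ8 (by ring) (by rw [w0]; field_simp; ring) (by linear_combination w5)
    have hb2 := mul_nonpos_of_nonneg_of_nonpos (a := q / u) (by positivity) hb
    rw [← sub_nonpos]
    refine le_of_eq_of_le ?_ hb2
    rw [hA, hC, w0]
    clear hb hb2 da db dc dd s0 s1 s2 s3 s4 hD r0 r1 r2 w0 w1 w2 w3 w4 w4' w5 e0 e1 e2 e3
    field_simp
    ring


noncomputable def eiz (z : ℝ) : ℂ := Complex.exp (z * Complex.I)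
noncomputable def Pz (r z : ℝ) : ℂ × ℂ := (Real.cos r * eiz z, Real.sin r * eiz (-z))

lemma eiz_conj (z : ℝ) : (starRingEnd ℂ) (eiz z) = eiz (-z) := by
  simp [eiz, ← Complex.exp_conj]
lemma eiz_mul (z : ℝ) : eiz z * eiz (-z) = 1 := by
  simp [eiz, ← Complex.exp_add]
lemma eiz_deriv (z : ℝ) : HasDerivAt eiz (Complex.I * eiz z) z := by
  have h : HasDerivAt (fun z : ℝ => (z:ℂ) * Complex.I) (1 * Complex.I) z :=
    (Complex.ofRealCLM.hasDerivAt (x := z)).mul_const Complex.I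
  refine h.cexp.congr_deriv ?_
  simp [eiz]; ring
lemma eiz_deriv_neg (z : ℝ) : HasDerivAt (fun z => eiz (-z)) (-(Complex.I * eiz (-z))) z := by
  have := HasDerivAt.scomp z (eiz_deriv (-z)) (hasDerivAt_neg z)
  refine HasDerivAt.congr_deriv (f := fun z => eiz (-z)) this ?_
  simp

lemma Pz_mem (r z : ℝ) : Pz r z ∈ S3 := by
  have h1 : ∀ z : ℝ, Complex.normSq (eiz z) = 1 := by
    intro z
    rw [Complex.normSq_eq_norm_sq, eiz, Complex.norm_exp_ofReal_mul_I]; norm_num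
  simp only [S3, Set.mem_ofPred_eq, Pz, map_mul, h1, Complex.normSq_ofReal]
  nlinarith [Real.sin_sq_add_cos_sq r]

lemma Pz_r (r z : ℝ) (f : SA) :
    HasDerivAt (fun r => ev (Pz r z) f) (ev (Pz r z) ((-dX) f)) r := by
  apply ev_curve (fun r => Pz r z) r (-dX) _ _ (cos_cx _ r) (sin_cx _ r) <;>
  simp [dX, pt, Pz, MvPolynomial.mkDerivation_X, eiz_conj, -Complex.ofReal_cos, -Complex.ofReal_sin]

lemma Pz_z (r z : ℝ) (f : SA) :
    HasDerivAt (fun z => ev (Pz r z) f) (ev (Pz r z) ((dZ - (2:ℂ) • dG) f)) z := by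
  apply ev_curve (fun z => Pz r z) z (dZ - (2:ℂ) • dG) _ _ ((eiz_deriv z).const_mul _) ((eiz_deriv_neg z).const_mul _) <;>
  simp [dZ, dG, pt, Pz, MvPolynomial.mkDerivation_X, eiz_conj, MvPolynomial.smul_eval, -Complex.ofReal_cos, -Complex.ofReal_sin] <;> ring

lemma Pz_Y (r z : ℝ) (hs : Real.sin r ≠ 0) (hc : Real.cos r ≠ 0) (f : SA) (hf : dG f = 0) :
    ev (Pz r z) (dY f) = -Real.tan r * ev (Pz r z) (dZ f) := by
  have hs' : (Real.sin r : ℂ) ≠ 0 := by exact_mod_cast hs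
  have hc' : (Real.cos r : ℂ) ≠ 0 := by exact_mod_cast hc
  have hsc : (Real.sin r : ℂ) ^ 2 + (Real.cos r : ℂ) ^ 2 = 1 := by exact_mod_cast Real.sin_sq_add_cos_sq r
  have := deriv_point (pt (Pz r z)) dY (((-(Real.sin r / Real.cos r : ℂ))) • dZ + ((1 / (Real.sin r * Real.cos r) : ℂ)) • dG) ?_ f
  · rw [ev, this, Derivation.add_apply, Derivation.smul_apply, Derivation.smul_apply, hf, smul_zero, add_zero,
      MvPolynomial.smul_eval, Real.tan_eq_sin_div_cos]
    have e : (-(Real.sin r / Real.cos r : ℂ)) = ((-(Real.sin r / Real.cos r) : ℝ) : ℂ) := by push_cast; rfl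
    rw [e, Complex.re_ofReal_mul]; rfl
  · intro i
    fin_cases i
    · simp [dZ, dG, dY, pt, Pz, MvPolynomial.mkDerivation_X, eiz_conj, MvPolynomial.smul_eval, -Complex.ofReal_cos, -Complex.ofReal_sin]
      field_simp
    · simp [dZ, dG, dY, pt, Pz, MvPolynomial.mkDerivation_X, eiz_conj, MvPolynomial.smul_eval, -Complex.ofReal_cos, -Complex.ofReal_sin]
      field_simp
    · simp [dZ, dG, dY, pt, Pz, MvPolynomial.mkDerivation_X, eiz_conj, MvPolynomial.smul_eval, -Complex.ofReal_cos, -Complex.ofReal_sin]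
      field_simp
      linear_combination eiz (-z) * hsc
    · simp [dZ, dG, dY, pt, Pz, MvPolynomial.mkDerivation_X, eiz_conj, MvPolynomial.smul_eval, -Complex.ofReal_cos, -Complex.ofReal_sin]
      field_simp
      linear_combination -eiz z * hsc


noncomputable def del : ℕ → ℕ → ℝ
  | _, 0 => 1
  | 0, _+1 => 1
  | a+1, b+1 => del a (b+1) + del (a+1) b + del a b

lemma del_a0 (a : ℕ) : del a 0 = 1 := by cases a <;> simp [del]
lemma del_0b (b : ℕ) : del 0 b = 1 := by cases b <;> simp [del]
lemma del_ss (a b : ℕ) : del (a+1) (b+1) = del a (b+1) + del (a+1) b + del a b := by rw [del]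

lemma del_pos (a b : ℕ) : 0 < del a b := by
  revert a b
  apply phi_induction
  · intro a; simp [del_a0]
  · intro a; simp [del_0b]
  · intro a b h1 h2 h3; rw [del_ss]; positivity

lemma del_symm (a b : ℕ) : del a b = del b a := by
  revert a b
  apply phi_induction
  · intro a; simp [del_a0, del_0b]
  · intro a; simp [del_0b, del_a0]
  · intro a b h1 h2 h3; rw [del_ss, del_ss, h1, h2, h3]; ring

lemma del_le (a b : ℕ) : del a b ≤ (1 + 2 * (b:ℝ)) ^ a := by
  revert a b
  apply phi_induction
  · intro a; simp [del_a0]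
  · intro a; simp [del_0b]
  · intro a b h1 h2 h3
    rw [del_ss]
    push_cast at *
    have h4 : (1 + 2 * (b:ℝ)) ^ a ≤ (1 + 2 * ((b:ℝ) + 1)) ^ a := by gcongr; linarith
    rw [pow_succ] at *
    nlinarith [Nat.cast_nonneg (α := ℝ) b]

lemma pt_norm {p : ℂ × ℂ} (hp : p ∈ S3) (i : Fin 4) : ‖pt p i‖ ≤ 1 := by
  simp only [S3, Set.mem_ofPred_eq, Complex.normSq_eq_norm_sq] at hp
  have h1 : ‖p.1‖ ≤ 1 := by nlinarith [norm_nonneg p.1, sq_nonneg ‖p.2‖]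
  have h2 : ‖p.2‖ ≤ 1 := by nlinarith [norm_nonneg p.2, sq_nonneg ‖p.1‖]
  fin_cases i <;> simp [pt, h1, h2]

lemma rho_S3 {p : ℂ × ℂ} (hp : p ∈ S3) : MvPolynomial.eval (pt p) rho = 1 := by
  simp only [S3, Set.mem_ofPred_eq] at hp
  simp only [rho, map_add, map_mul, MvPolynomial.eval_X, pt]
  simp [Complex.mul_conj]
  exact_mod_cast hp

lemma phi_norm {p : ℂ × ℂ} (hp : p ∈ S3) (a b : ℕ) :
    ‖MvPolynomial.eval (pt p) (phi a b)‖ ≤ del a b := by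
  revert a b
  apply phi_induction
  · intro a; rw [phi_a0, del_a0, map_pow, MvPolynomial.eval_X, norm_pow]
    exact pow_le_one₀ (norm_nonneg _) (pt_norm hp 0)
  · intro a; rw [phi_0b, del_0b, map_pow, MvPolynomial.eval_X, norm_pow]
    exact pow_le_one₀ (norm_nonneg _) (pt_norm hp 1)
  · intro a b h1 h2 h3
    rw [phi_ss, del_ss, map_sub, map_add, map_mul, map_mul, map_mul, rho_S3 hp, one_mul, MvPolynomial.eval_X, MvPolynomial.eval_X]
    refine (norm_sub_le _ _).trans (add_le_add ((norm_add_le _ _).trans (add_le_add ?_ ?_)) h1)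
    · rw [norm_mul]
      exact (mul_le_of_le_one_left (norm_nonneg _) (pt_norm hp 0)).trans h2
    · rw [norm_mul]
      exact (mul_le_of_le_one_left (norm_nonneg _) (pt_norm hp 1)).trans h3

lemma D_phi_norm {p : ℂ × ℂ} (hp : p ∈ S3) (D : Derivation ℂ SA SA) (hD : D rho = 0)
    (h0 : ‖MvPolynomial.eval (pt p) (D (MvPolynomial.X 0))‖ ≤ 1)
    (h1 : ‖MvPolynomial.eval (pt p) (D (MvPolynomial.X 1))‖ ≤ 1) (a b : ℕ) :
    ‖MvPolynomial.eval (pt p) (D (phi a b))‖ ≤ (a + b : ℝ) * del a b := by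
  have hm : ∀ f g : SA, D (f * g) = f * D g + g * D f := fun f g => by simp [Derivation.leibniz]
  have hpw : ∀ (i : Fin 4) (n : ℕ), ‖MvPolynomial.eval (pt p) (D (MvPolynomial.X i))‖ ≤ 1 →
      ‖MvPolynomial.eval (pt p) (D (MvPolynomial.X i ^ n))‖ ≤ n := by
    intro i n hi
    rw [Derivation.leibniz_pow]
    simp only [smul_eq_mul, map_mul, map_pow, MvPolynomial.eval_X, nsmul_eq_mul, map_natCast, norm_mul, norm_pow, Complex.norm_natCast]
    have : ‖pt p i‖ ^ (n-1) ≤ 1 := pow_le_one₀ (norm_nonneg _) (pt_norm hp i)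
    have h2 : ‖pt p i‖ ^ (n-1) * ‖MvPolynomial.eval (pt p) (D (MvPolynomial.X i))‖ ≤ 1 :=
      mul_le_one₀ this (norm_nonneg _) hi
    exact mul_le_of_le_one_right (by positivity) h2
  revert a b
  apply phi_induction
  · intro a
    rw [phi_a0, del_a0]; simpa using hpw 0 a h0
  · intro a
    rw [phi_0b, del_0b]; simpa using hpw 1 a h1
  · intro a b e1 e2 e3
    rw [phi_ss, del_ss, map_sub, map_add, hm, hm, hm, hD]
    simp only [map_sub, map_add, map_mul, rho_S3 hp, one_mul, mul_zero, add_zero, MvPolynomial.eval_X]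
    have k1 := phi_norm hp a (b+1)
    have k2 := phi_norm hp (a+1) b
    have k3 := del_pos a b
    refine (norm_sub_le _ _).trans ?_
    have n1 : ∀ x y u v : ℂ, ‖x‖ ≤ 1 → ‖v‖ ≤ 1 → ‖x * y + u * v‖ ≤ ‖y‖ + ‖u‖ := by
      intro x y u v hx hv
      refine (norm_add_le _ _).trans ?_
      rw [norm_mul, norm_mul]
      exact add_le_add (mul_le_of_le_one_left (norm_nonneg _) hx) (mul_le_of_le_one_right (norm_nonneg _) hv)
    have m1 := n1 _ (MvPolynomial.eval (pt p) (D (phi a (b+1)))) (MvPolynomial.eval (pt p) (phi a (b+1))) _ (pt_norm hp 0) h0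
    have m2 := n1 _ (MvPolynomial.eval (pt p) (D (phi (a+1) b))) (MvPolynomial.eval (pt p) (phi (a+1) b)) _ (pt_norm hp 1) h1
    have m3 := norm_add_le (pt p 0 * MvPolynomial.eval (pt p) (D (phi a (b+1))) + MvPolynomial.eval (pt p) (phi a (b+1)) * MvPolynomial.eval (pt p) (D (MvPolynomial.X 0)))
      (pt p 1 * MvPolynomial.eval (pt p) (D (phi (a+1) b)) + MvPolynomial.eval (pt p) (phi (a+1) b) * MvPolynomial.eval (pt p) (D (MvPolynomial.X 1)))
    push_cast at *
    nlinarith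

lemma exp_bound (t : ℝ) (ht : 0 < t) : ∃ K > 0, ∀ a b : ℕ, del a b ≤ K * Real.exp (2 * t * a * b) := by
  set K' := t / 2 + Real.log (2 / t) - 1 with hK'
  have key : ∀ a b : ℕ, b ≤ a → del a b ≤ Real.exp (K' ^ 2 / (4 * t)) * Real.exp (2 * t * a * b) := by
    intro a b hab
    rw [del_symm]
    refine (del_le b a).trans ?_
    have hpos : 0 < 1 + 2 * (a:ℝ) := by positivity
    rw [← Real.exp_log hpos, ← Real.exp_nat_mul, ← Real.exp_add]
    apply Real.exp_le_exp.mpr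
    have h1 : Real.log (1 + 2 * (a:ℝ)) ≤ t * a + K' := by
      have h2 := Real.log_le_sub_one_of_pos (x := (1 + 2 * (a:ℝ)) / (2 / t)) (by positivity)
      rw [Real.log_div hpos.ne' (by positivity)] at h2
      have : (1 + 2 * (a:ℝ)) / (2 / t) = t / 2 + t * a := by field_simp
      rw [this] at h2
      linarith
    have h3 : (b:ℝ) * K' ≤ t * b ^ 2 + K' ^ 2 / (4 * t) := by
      have : t * (b:ℝ) ^ 2 + K' ^ 2 / (4 * t) - b * K' = (2 * t * b - K') ^ 2 / (4 * t) := by field_simp; ring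
      have h4 : 0 ≤ (2 * t * b - K') ^ 2 / (4 * t) := by positivity
      linarith
    have hab' : (b:ℝ) ≤ a := by exact_mod_cast hab
    have h5 : (b:ℝ) * Real.log (1 + 2 * (a:ℝ)) ≤ b * (t * a + K') := by gcongr
    have h6 : t * (b:ℝ) ^ 2 ≤ t * a * b := by
      rw [mul_assoc, pow_two]; gcongr
    nlinarith
  refine ⟨_, Real.exp_pos (K' ^ 2 / (4 * t)), fun a b => ?_⟩
  rcases le_total b a with h | h
  · exact key a b h
  · rw [del_symm]
    have := key b a h
    rwa [show 2 * t * (b:ℝ) * a = 2 * t * a * b by ring] at this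

noncomputable def bd (t : ℝ) (i : ℕ × ℕ) : ℝ := 4 * ((i.1:ℝ) + i.2 + 1) ^ 3 * del i.1 i.2 * Real.exp (-lam i * t)

lemma bd_summable (t : ℝ) (ht : 0 < t) : Summable (bd t) := by
  obtain ⟨K, hK, hb⟩ := exp_bound t ht
  have hs : Summable (fun n : ℕ => ((n:ℝ) + 1) ^ 3 * Real.exp (-(2 * t) * n)) := by
    have := (summable_nat_add_iff 1).mpr (summable_pow_mul_geometric_of_norm_lt_one 3 (r := Real.exp (-(2*t))) (by
      simpa using ht))
    refine (this.mul_left (Real.exp (2*t))).congr fun n => ?_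
    push_cast
    rw [← Real.exp_nat_mul, mul_comm, mul_assoc, ← Real.exp_add]
    congr 2; push_cast; ring
  have hs2 := hs.mul_of_nonneg hs (fun n => by positivity) (fun n => by positivity)
  refine Summable.of_nonneg_of_le (fun i => ?_) (fun i => ?_) (hs2.mul_left (4 * K))
  · have := del_pos i.1 i.2
    unfold bd; positivity
  · have h1 := hb i.1 i.2
    have h0 := del_pos i.1 i.2
    unfold bd
    have e : Real.exp (2 * t * i.1 * i.2) * Real.exp (-lam i * t) ≤ Real.exp (-(2 * t) * i.1) * Real.exp (-(2 * t) * i.2) := by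
      rw [← Real.exp_add, ← Real.exp_add]
      apply Real.exp_le_exp.mpr
      unfold lam
      have : 0 ≤ t * ((i.1:ℝ) * i.2) := by positivity
      nlinarith
    have e2 : ((i.1:ℝ) + i.2 + 1) ^ 3 ≤ ((i.1:ℝ)+1) ^ 3 * ((i.2:ℝ)+1) ^ 3 := by
      rw [← mul_pow]
      gcongr
      nlinarith [mul_nonneg (Nat.cast_nonneg (α := ℝ) i.1) (Nat.cast_nonneg (α := ℝ) i.2)]
    calc 4 * ((i.1:ℝ) + i.2 + 1) ^ 3 * del i.1 i.2 * Real.exp (-lam i * t)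
        ≤ 4 * (((i.1:ℝ)+1) ^ 3 * ((i.2:ℝ)+1) ^ 3) * (K * Real.exp (2 * t * i.1 * i.2)) * Real.exp (-lam i * t) := by gcongr
      _ = 4 * K * (((i.1:ℝ)+1) ^ 3 * ((i.2:ℝ)+1) ^ 3) * (Real.exp (2 * t * i.1 * i.2) * Real.exp (-lam i * t)) := by ring
      _ ≤ 4 * K * (((i.1:ℝ)+1) ^ 3 * ((i.2:ℝ)+1) ^ 3) * (Real.exp (-(2 * t) * i.1) * Real.exp (-(2 * t) * i.2)) := by gcongr
      _ = _ := by ring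

lemma lam_nonneg (i : ℕ × ℕ) : 0 ≤ lam i := by unfold lam; positivity
lemma lam_le (i : ℕ × ℕ) : lam i ≤ 4 * ((i.1:ℝ) + i.2 + 1) ^ 2 := by
  unfold lam
  have h1 : (0:ℝ) ≤ i.1 := by positivity
  have h2 : (0:ℝ) ≤ i.2 := by positivity
  nlinarith [mul_nonneg h1 h2]

/-- admissible operators -/
def Adm (D : SA →ₗ[ℂ] SA) : Prop :=
  ∀ p ∈ S3, ∀ i : ℕ × ℕ, |ev p (D (phi i.1 i.2))| ≤ 4 * ((i.1:ℝ) + i.2 + 1) ^ 2 * del i.1 i.2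

lemma adm_id : Adm LinearMap.id := by
  intro p hp i
  have h1 := (Complex.abs_re_le_norm _).trans (phi_norm hp i.1 i.2)
  have h0 := del_pos i.1 i.2
  refine h1.trans ?_
  have : (1:ℝ) ≤ 4 * ((i.1:ℝ) + i.2 + 1) ^ 2 := by
    nlinarith [Nat.cast_nonneg (α := ℝ) i.1, Nat.cast_nonneg (α := ℝ) i.2]
  exact le_mul_of_one_le_left h0.le this

lemma adm_D (D : Derivation ℂ SA SA) (hD : D rho = 0)
    (h0 : ∀ p ∈ S3, ‖MvPolynomial.eval (pt p) (D (MvPolynomial.X 0))‖ ≤ 1)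
    (h1 : ∀ p ∈ S3, ‖MvPolynomial.eval (pt p) (D (MvPolynomial.X 1))‖ ≤ 1) : Adm D.toLinearMap := by
  intro p hp i
  have h1 := (Complex.abs_re_le_norm _).trans (D_phi_norm hp D hD (h0 p hp) (h1 p hp) i.1 i.2)
  have h0 := del_pos i.1 i.2
  refine h1.trans ?_
  gcongr
  nlinarith [Nat.cast_nonneg (α := ℝ) i.1, Nat.cast_nonneg (α := ℝ) i.2]

lemma adm_X : Adm dX.toLinearMap := by
  apply adm_D
  · rw [dX_eq, dE_rho, dF_rho, add_zero]
  · intro p hp; simpa [dX, MvPolynomial.mkDerivation_X] using pt_norm hp 3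
  · intro p hp; simpa [dX, MvPolynomial.mkDerivation_X] using pt_norm hp 2

lemma dZ_rho : dZ rho = 0 := by
  simp [dZ, rho, MvPolynomial.mkDerivation_X, Derivation.leibniz, mul_comm]

lemma adm_Z : Adm dZ.toLinearMap := by
  apply adm_D
  · exact dZ_rho
  · intro p hp; simpa [dZ, MvPolynomial.mkDerivation_X, MvPolynomial.smul_eval] using pt_norm hp 0
  · intro p hp; simpa [dZ, MvPolynomial.mkDerivation_X, MvPolynomial.smul_eval] using pt_norm hp 1

lemma adm_L : Adm opLl := by
  intro p hp i
  have h1 := (Complex.abs_re_le_norm _).trans (phi_norm hp i.1 i.2)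
  change |ev p (opL (phi i.1 i.2))| ≤ _
  rw [opL_phi', ev_smul, abs_mul, abs_neg, abs_of_nonneg (lam_nonneg i)]
  have h0 := del_pos i.1 i.2
  exact mul_le_mul (lam_le i) h1 (abs_nonneg _) (by positivity)

/-- general term of the series -/
noncomputable def ker (D : SA →ₗ[ℂ] SA) (t : ℝ) (p : ℂ × ℂ) (i : ℕ × ℕ) : ℝ :=
  ((i.1:ℝ) + i.2 + 1) * Real.exp (-lam i * t) * ev p (D (phi i.1 i.2))

lemma ker_bound (D : SA →ₗ[ℂ] SA) (hD : Adm D) {s t : ℝ} (hst : s ≤ t) {p : ℂ × ℂ} (hp : p ∈ S3) (i : ℕ × ℕ) :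
    |ker D t p i| ≤ bd s i := by
  unfold ker bd
  have h0 := del_pos i.1 i.2
  rw [abs_mul, abs_of_nonneg (by positivity)]
  have e : Real.exp (-lam i * t) ≤ Real.exp (-lam i * s) := by
    apply Real.exp_le_exp.mpr; nlinarith [lam_nonneg i]
  calc _ ≤ ((i.1:ℝ) + i.2 + 1) * Real.exp (-lam i * s) * (4 * ((i.1:ℝ) + i.2 + 1) ^ 2 * del i.1 i.2) := by
        gcongr; exact hD p hp i
    _ = _ := by ring

noncomputable def KK (D : SA →ₗ[ℂ] SA) (t : ℝ) (p : ℂ × ℂ) : ℝ := ∑' i, ker D t p i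

lemma ker_summable (D : SA →ₗ[ℂ] SA) (hD : Adm D) {t : ℝ} (ht : 0 < t) {p : ℂ × ℂ} (hp : p ∈ S3) :
    Summable (ker D t p) :=
  Summable.of_norm_bounded (bd_summable t ht) (fun i => ker_bound D hD le_rfl hp i)

lemma KK_r {t : ℝ} (ht : 0 < t) (r z : ℝ) :
    HasDerivAt (fun r => KK LinearMap.id t (Pz r z)) (-KK dX.toLinearMap t (Pz r z)) r := by
  have := hasDerivAt_tsum (g := fun i r => ker LinearMap.id t (Pz r z) i)
    (g' := fun i r => -ker dX.toLinearMap t (Pz r z) i) (bd_summable t ht) ?_ ?_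
    (y₀ := r) (ker_summable _ adm_id ht (Pz_mem r z)) r
  · rw [tsum_neg] at this; exact this
  · intro i y
    refine ((Pz_r y z (phi i.1 i.2)).const_mul (((i.1:ℝ) + i.2 + 1) * Real.exp (-lam i * t))).congr_deriv ?_
    have : ev (Pz y z) ((-dX) (phi i.1 i.2)) = - ev (Pz y z) (dX (phi i.1 i.2)) := by simp [ev]
    rw [this]; simp only [ker]
    change _ = -(_ * ev (Pz y z) (dX (phi i.1 i.2)))
    ring
  · intro i y
    rw [norm_neg]
    exact ker_bound _ adm_X le_rfl (Pz_mem y z) i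

lemma KK_z {t : ℝ} (ht : 0 < t) (r z : ℝ) :
    HasDerivAt (fun z => KK LinearMap.id t (Pz r z)) (KK dZ.toLinearMap t (Pz r z)) z := by
  have := hasDerivAt_tsum (g := fun i z => ker LinearMap.id t (Pz r z) i)
    (g' := fun i z => ker dZ.toLinearMap t (Pz r z) i) (bd_summable t ht) ?_ ?_
    (y₀ := z) (ker_summable _ adm_id ht (Pz_mem r z)) z
  · exact this
  · intro i y
    refine ((Pz_z r y (phi i.1 i.2)).const_mul (((i.1:ℝ) + i.2 + 1) * Real.exp (-lam i * t))).congr_deriv ?_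
    rw [Derivation.sub_apply, Derivation.smul_apply, dG_phi, smul_zero, sub_zero]
    rfl
  · intro i y
    exact ker_bound _ adm_Z le_rfl (Pz_mem r y) i

lemma KK_t {t : ℝ} (ht : 0 < t) {p : ℂ × ℂ} (hp : p ∈ S3) :
    HasDerivAt (fun t => KK LinearMap.id t p) (KK opLl t p) t := by
  have := hasDerivAt_tsum_of_isPreconnected (g := fun i t => ker LinearMap.id t p i)
    (g' := fun i t => ker opLl t p i) (bd_summable (t/2) (by linarith)) (t := Set.Ioi (t/2)) isOpen_Ioi
    (convex_Ioi _).isPreconnected ?_ ?_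
    (y₀ := t) (by simpa using ht) (ker_summable _ adm_id ht hp) (y := t) (by simpa using ht)
  · exact this
  · intro i y hy
    have h1 : HasDerivAt (fun y : ℝ => Real.exp (-lam i * y)) (Real.exp (-lam i * y) * (-lam i * 1)) y :=
      ((hasDerivAt_id y).const_mul (-lam i)).exp
    refine ((h1.const_mul ((i.1:ℝ) + i.2 + 1)).mul_const (ev p (phi i.1 i.2))).congr_deriv ?_
    unfold ker
    change _ = _ * ev p (opL (phi i.1 i.2))
    rw [opL_phi', ev_smul]; ring
  · intro i y hy
    exact ker_bound _ adm_L (le_of_lt hy) hp i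


lemma phi_explicit (p : ℂ × ℂ) (a b : ℕ) : ∀ K : ℕ, min a b < K →
    MvPolynomial.eval (pt p) (phi a b) = ∑ j ∈ Finset.range K, (a.choose j : ℂ) * (b.choose j) *
      (-(p.2 * (starRingEnd ℂ) p.2)) ^ j * p.1 ^ (a - j) * ((starRingEnd ℂ) p.1) ^ (b - j) := by
  revert a b
  apply phi_induction
  · intro a K hK
    rw [Finset.sum_eq_single 0]
    · simp [phi_a0, pt]
    · intro j _ hj
      rw [Nat.choose_eq_zero_of_lt (n := 0) (by omega)]; simp
    · intro h; simp at h; omega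
  · intro a K hK
    rw [Finset.sum_eq_single 0]
    · simp [phi_0b, pt]
    · intro j _ hj
      rw [Nat.choose_eq_zero_of_lt (n := 0) (by omega)]; simp
    · intro h; simp at h; omega
  · intro a b h1 h2 h3 K hK
    obtain ⟨K, rfl⟩ : ∃ K', K = K' + 1 := ⟨K - 1, by omega⟩
    have e : MvPolynomial.eval (pt p) rho = p.1 * (starRingEnd ℂ) p.1 - (-(p.2 * (starRingEnd ℂ) p.2)) := by
      simp [rho, pt]
    rw [phi_ss, map_sub, map_add, map_mul, map_mul, map_mul, e, sub_mul, h2 (K+1) (by omega), h3 (K+1) (by omega)]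
    nth_rewrite 1 [h1 (K+1) (by omega)]
    rw [h1 K (by omega)]
    have x0 : MvPolynomial.eval (pt p) (MvPolynomial.X 0 : SA) = p.1 := by simp [pt]
    have x1 : MvPolynomial.eval (pt p) (MvPolynomial.X 1 : SA) = (starRingEnd ℂ) p.1 := by simp [pt]
    rw [x0, x1]
    generalize (-(p.2 * (starRingEnd ℂ) p.2)) = q
    generalize p.1 = w
    generalize (starRingEnd ℂ) w = w'
    rw [Finset.mul_sum, Finset.mul_sum, Finset.mul_sum, Finset.mul_sum]
    have P : ∀ (x : ℂ) (n j : ℕ), x * ((n.choose j : ℂ) * x ^ (n - j)) = n.choose j * x ^ (n + 1 - j) := by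
      intro x n j
      rcases le_or_gt j n with h | h
      · rw [show n + 1 - j = (n - j) + 1 by omega, pow_succ]; ring
      · rw [Nat.choose_eq_zero_of_lt h]; simp
    have E1 : ∀ j, w * ((a.choose j : ℂ) * ((b+1).choose j : ℕ) * q ^ j * w ^ (a - j) * w' ^ (b + 1 - j)) =
        (a.choose j : ℂ) * ((b+1).choose j : ℕ) * (q ^ j * w ^ (a + 1 - j) * w' ^ (b + 1 - j)) := by
      intro j; linear_combination ((b+1).choose j : ℕ) * q ^ j * w' ^ (b + 1 - j) * P w a j
    have E2 : ∀ j, w' * (((a+1).choose j : ℂ) * (b.choose j : ℕ) * q ^ j * w ^ (a + 1 - j) * w' ^ (b - j)) =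
        ((a+1).choose j : ℂ) * (b.choose j : ℕ) * (q ^ j * w ^ (a + 1 - j) * w' ^ (b + 1 - j)) := by
      intro j; linear_combination ((a+1).choose j : ℕ) * q ^ j * w ^ (a + 1 - j) * P w' b j
    have E3 : ∀ j, w * w' * ((a.choose j : ℂ) * (b.choose j : ℕ) * q ^ j * w ^ (a - j) * w' ^ (b - j)) =
        (a.choose j : ℂ) * (b.choose j : ℕ) * (q ^ j * w ^ (a + 1 - j) * w' ^ (b + 1 - j)) := by
      intro j; linear_combination (b.choose j : ℕ) * q ^ j * (w' * w' ^ (b - j)) * P w a j + (a.choose j : ℕ) * q ^ j * w ^ (a+1-j) * P w' b j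
    simp only [E1, E2, E3]
    rw [Finset.sum_range_succ' _ K, Finset.sum_range_succ' _ K, Finset.sum_range_succ' _ K, Finset.sum_range_succ' _ K]
    simp only [Nat.choose_zero_right, Nat.choose_succ_succ', Nat.add_sub_add_right]
    have fin : ∀ (f g h k l : ℕ → ℂ) (f0 g0 h0 l0 : ℂ), (∀ j, f j + g j - (h j - k j) = l j) → f0 + g0 - h0 = l0 →
      ∑ j ∈ Finset.range K, f j + f0 + (∑ j ∈ Finset.range K, g j + g0) -
        (∑ j ∈ Finset.range K, h j + h0 - ∑ j ∈ Finset.range K, k j) = ∑ j ∈ Finset.range K, l j + l0 := by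
      intro f g h k l f0 g0 h0 l0 hh h0
      have : ∑ j ∈ Finset.range K, f j + ∑ j ∈ Finset.range K, g j -
        (∑ j ∈ Finset.range K, h j - ∑ j ∈ Finset.range K, k j) = ∑ j ∈ Finset.range K, l j := by
        rw [← Finset.sum_add_distrib, ← Finset.sum_sub_distrib, ← Finset.sum_sub_distrib]
        exact Finset.sum_congr rfl fun j _ => hh j
      linear_combination this + h0
    apply fin
    · intro j
      push_cast
      ring
    · ring

lemma jacobi_explicit (k m : ℕ) (x : ℝ) (hx : 1 + x ≠ 0) :
    jacobiP k m x = ∑ i ∈ Finset.range (k+1), (k.choose i : ℝ) * ((m+k).choose i) * (-1) ^ i *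
      ((1 + x) / 2) ^ (k - i) * ((1 - x) / 2) ^ i := by
  unfold jacobiP
  have e : (fun y : ℝ => (1 + y) ^ m * (1 - y ^ 2) ^ k) = (fun y : ℝ => (y + 1) ^ (m+k) * (1 - y) ^ k) := by
    ext y; rw [show 1 - y ^ 2 = (y + 1) * (1 - y) by ring, mul_pow, pow_add]; ring
  rw [e, iteratedDeriv_fun_mul (by fun_prop) (by fun_prop)]
  have e1 : ∀ i, iteratedDeriv i (fun y : ℝ => (y + 1) ^ (m+k)) x = (m+k).descFactorial i * (x + 1) ^ (m + k - i) := by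
    intro i
    exact (congrFun (iteratedDeriv_comp_add_const i (fun y : ℝ => y ^ (m+k)) 1) x).trans (iteratedDeriv_pow _ _)
  have e2 : ∀ i, iteratedDeriv i (fun y : ℝ => (1 - y) ^ k) x = (-1) ^ i * (k.descFactorial i * (1 - x) ^ (k - i)) := by
    intro i
    refine (congrFun (iteratedDeriv_comp_const_sub i (fun y : ℝ => y ^ k) 1) x).trans ?_
    simp only [iteratedDeriv_pow, smul_eq_mul]
  simp only [e1, e2]
  rw [Finset.mul_sum]
  refine Finset.sum_congr rfl fun i hi => ?_
  have hik : i ≤ k := by simp at hi; omega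
  obtain ⟨j, rfl⟩ := Nat.exists_eq_add_of_le hik
  have f1 : ((m + (i+j)).descFactorial i : ℝ) = i.factorial * (m + (i+j)).choose i := by
    exact_mod_cast Nat.descFactorial_eq_factorial_mul_choose _ _
  have f2 : (i.factorial : ℝ) * ((i+j).descFactorial j) = (i+j).factorial := by
    have := Nat.factorial_mul_descFactorial (n := i + j) (k := j) (by omega)
    rw [Nat.add_sub_cancel] at this
    exact_mod_cast this
  rw [f1, ← f2]
  have g1 : i + j - i = j := by omega
  have g2 : m + (i + j) - i = m + j := by omega
  have g3 : i + j - j = i := by omega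
  rw [g1, g2, g3]
  have n1 : (i.factorial : ℝ) ≠ 0 := by positivity
  have n2 : ((i+j).descFactorial j : ℝ) ≠ 0 := by
    rw [Nat.cast_ne_zero, Ne, Nat.descFactorial_eq_zero_iff_lt]; omega
  have s : ((-1:ℝ) ^ j) ^ 2 = 1 := by rw [← pow_mul, mul_comm, pow_mul]; norm_num
  rw [div_pow, div_pow, pow_add (-1 : ℝ), pow_add (x+1) m j, add_comm x 1, pow_add (2:ℝ) i j]
  field_simp
  linear_combination ((i+j).choose i : ℝ) * ((m+(i+j)).choose i) * (1-x)^i * s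

noncomputable def cker (t : ℝ) (p : ℂ × ℂ) (i : ℕ × ℕ) : ℂ :=
  ((((i.1:ℝ) + i.2 + 1) * Real.exp (-lam i * t) : ℝ) : ℂ) * MvPolynomial.eval (pt p) (phi i.1 i.2)

lemma cker_re (t : ℝ) (p : ℂ × ℂ) (i : ℕ × ℕ) : (cker t p i).re = ker LinearMap.id t p i := by
  rw [cker, Complex.re_ofReal_mul]; rfl

def idx : ℤ × ℕ ≃ ℕ × ℕ where
  toFun q := (q.2 + q.1.toNat, q.2 + (-q.1).toNat)
  invFun i := ((i.1 : ℤ) - i.2, min i.1 i.2)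
  left_inv := by
    rintro ⟨n, k⟩
    simp only [Prod.mk.injEq]
    constructor <;> omega
  right_inv := by
    rintro ⟨a, b⟩
    simp only [Prod.mk.injEq]
    constructor <;> omega

lemma phi_polar (r z : ℝ) (hc : Real.cos r ≠ 0) (m k : ℕ) :
    MvPolynomial.eval (pt (Pz r z)) (phi (k + m) k) =
      ((Real.cos r ^ m * jacobiP k m (Real.cos (2 * r)) : ℝ) : ℂ) * eiz z ^ m := by
  have h1 : 1 + Real.cos (2 * r) = 2 * Real.cos r ^ 2 := by rw [Real.cos_two_mul]; ring
  have h2 : (1 - Real.cos (2 * r)) / 2 = Real.sin r ^ 2 := by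
    rw [Real.cos_two_mul]; linarith [Real.sin_sq_add_cos_sq r]
  rw [jacobi_explicit _ _ _ (by rw [h1]; positivity), phi_explicit _ _ _ (k+1) (by omega), h1, h2,
    mul_div_cancel_left₀ _ (two_ne_zero), Finset.mul_sum]
  push_cast
  rw [Finset.sum_mul]
  refine Finset.sum_congr rfl fun j hj => ?_
  have hjk : j ≤ k := by simp at hj; omega
  obtain ⟨l, rfl⟩ := Nat.exists_eq_add_of_le hjk
  have g1 : j + l - j = l := by omega
  have g2 : j + l + m - j = l + m := by omega
  rw [g1, g2]
  simp only [Pz, map_mul, eiz_conj, neg_neg, Complex.conj_ofReal]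
  have e1 := eiz_mul z
  have e2 : (Real.sin r * eiz (-z) * (Real.sin r * eiz z) : ℂ) = Real.sin r ^ 2 := by
    linear_combination (Real.sin r : ℂ) ^ 2 * e1
  have e3 : eiz z ^ l * eiz (-z) ^ l = 1 := by rw [← mul_pow, e1, one_pow]
  rw [e2, mul_pow, mul_pow, neg_pow, add_comm m (j+l), pow_add (eiz z), pow_add (Real.cos r : ℂ)]
  push_cast
  simp only [← pow_mul]
  rw [show 2 * l = l + l by ring, pow_add]
  linear_combination ((j + l + m).choose j * (j+l).choose j * (-1)^j * Complex.sin r ^ (2*j) * Complex.cos r ^ l * Complex.cos r ^ l * Complex.cos r ^ m * eiz z ^ m) * e3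

lemma phi_polar' (r z : ℝ) (hc : Real.cos r ≠ 0) (m k : ℕ) :
    MvPolynomial.eval (pt (Pz r z)) (phi k (k + m)) =
      ((Real.cos r ^ m * jacobiP k m (Real.cos (2 * r)) : ℝ) : ℂ) * eiz (-z) ^ m := by
  have h1 := phi_polar r (-z) hc m k
  rw [← h1, phi_explicit _ _ _ (k+1) (by omega), phi_explicit _ _ _ (k+1) (by omega)]
  refine Finset.sum_congr rfl fun j hj => ?_
  simp only [Pz, map_mul, eiz_conj, neg_neg, Complex.conj_ofReal]
  ring

lemma heatTerm_eq (t r z : ℝ) (hc : Real.cos r ≠ 0) (q : ℤ × ℕ) :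
    heatTerm t r z q.1 q.2 = cker t (Pz r z) (idx q) := by
  obtain ⟨n, k⟩ := q
  have hz : ∀ (m : ℕ) (z : ℝ), Complex.exp ((m:ℂ) * z * Complex.I) = eiz z ^ m := by
    intro m z; rw [eiz, ← Complex.exp_nat_mul]; congr 1; ring
  obtain ⟨m, rfl | rfl⟩ := n.eq_nat_or_neg
  · have hi : idx ((m:ℤ), k) = (k + m, k) := by simp [idx]
    simp only [hi, heatTerm, cker, phi_polar r z hc, Int.natAbs_natCast]
    rw [Int.cast_natCast, hz]
    simp only [lam]
    push_cast
    ring_nf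
  · have hi : idx (-(m:ℤ), k) = (k, k + m) := by simp [idx]
    simp only [hi, heatTerm, cker, phi_polar' r z hc, Int.natAbs_neg, Int.natAbs_natCast]
    have := hz m (-z)
    push_cast at this
    rw [Int.cast_neg, Int.cast_natCast, show -(m:ℂ) * z = m * (-z) by ring, this]
    simp only [lam]
    push_cast
    ring_nf

lemma cker_summable {t : ℝ} (ht : 0 < t) {p : ℂ × ℂ} (hp : p ∈ S3) : Summable (cker t p) := by
  refine Summable.of_norm_bounded (bd_summable t ht) (fun i => ?_)
  have h0 := del_pos i.1 i.2
  rw [cker, norm_mul, Complex.norm_real, Real.norm_of_nonneg (by positivity), bd]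
  have : (1:ℝ) ≤ 4 * ((i.1:ℝ) + i.2 + 1) ^ 2 := by
    nlinarith [Nat.cast_nonneg (α := ℝ) i.1, Nat.cast_nonneg (α := ℝ) i.2]
  calc _ ≤ ((i.1:ℝ) + i.2 + 1) * Real.exp (-lam i * t) * del i.1 i.2 := by gcongr; exact phi_norm hp _ _
    _ ≤ ((i.1:ℝ) + i.2 + 1) * Real.exp (-lam i * t) * del i.1 i.2 * (4 * ((i.1:ℝ) + i.2 + 1) ^ 2) :=
        le_mul_of_one_le_right (by positivity) this
    _ = _ := by ring

lemma heatP_eq (t r z : ℝ) (ht : 0 < t) (hc : Real.cos r ≠ 0) :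
    heatP t r z = KK LinearMap.id t (Pz r z) := by
  have hs := cker_summable ht (Pz_mem r z)
  have hs2 : Summable (fun q : ℤ × ℕ => cker t (Pz r z) (idx q)) := (idx.summable_iff (f := cker t (Pz r z))).mpr hs
  have h2 : ∑' n : ℤ, ∑' k : ℕ, heatTerm t r z n k = ∑' i, cker t (Pz r z) i := by
    rw [← idx.tsum_eq (cker t (Pz r z)), hs2.tsum_prod]
    exact tsum_congr fun n => tsum_congr fun k => heatTerm_eq t r z hc (n, k)
  rw [heatP, h2, Complex.re_tsum hs]
  exact tsum_congr fun i => cker_re t _ i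


noncomputable def TT (p : ℂ × ℂ) (N : ℕ) : ℝ := ∑ i ∈ Finset.HasAntidiagonal.antidiagonal N, ev p (phi i.1 i.2)

lemma TT_rec {p : ℂ × ℂ} (hp : p ∈ S3) (N : ℕ) : TT p (N+2) = 2 * p.1.re * TT p (N+1) - TT p N := by
  have hT : ∀ N, TT p N = (∑ i ∈ Finset.HasAntidiagonal.antidiagonal N, MvPolynomial.eval (pt p) (phi i.1 i.2)).re := by
    intro N; simp [TT, ev]
  have x0 : MvPolynomial.eval (pt p) (MvPolynomial.X 0 : SA) = p.1 := by simp [pt]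
  have x1 : MvPolynomial.eval (pt p) (MvPolynomial.X 1 : SA) = (starRingEnd ℂ) p.1 := by simp [pt]
  have key : ∑ i ∈ Finset.HasAntidiagonal.antidiagonal (N+2), MvPolynomial.eval (pt p) (phi i.1 i.2) =
    ((2 * p.1.re : ℝ) : ℂ) * ∑ i ∈ Finset.HasAntidiagonal.antidiagonal (N+1), MvPolynomial.eval (pt p) (phi i.1 i.2) -
      ∑ i ∈ Finset.HasAntidiagonal.antidiagonal N, MvPolynomial.eval (pt p) (phi i.1 i.2) := by
    rw [Finset.Nat.sum_antidiagonal_succ, Finset.Nat.sum_antidiagonal_succ']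
    simp only [phi_ss, map_sub, map_add, map_mul, rho_S3 hp, one_mul, x0, x1, Finset.sum_sub_distrib, Finset.sum_add_distrib,
      ← Finset.mul_sum]
    have a1 := Finset.Nat.sum_antidiagonal_succ (f := fun i : ℕ × ℕ => MvPolynomial.eval (pt p) (phi i.1 i.2)) (n := N)
    have a2 := Finset.Nat.sum_antidiagonal_succ' (f := fun i : ℕ × ℕ => MvPolynomial.eval (pt p) (phi i.1 i.2)) (n := N)
    have hx : ((2 * p.1.re : ℝ) : ℂ) = p.1 + (starRingEnd ℂ) p.1 := by rw [Complex.add_conj]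
    rw [hx]
    simp only [phi_a0, phi_0b, map_pow, x0, x1] at a1 a2 ⊢
    linear_combination (-(starRingEnd ℂ) p.1) * a1 - p.1 * a2
  rw [hT, key, Complex.sub_re, Complex.re_ofReal_mul, ← hT, ← hT]

lemma TT_0 (p : ℂ × ℂ) : TT p 0 = 1 := by simp [TT, phi_a0, ev]
lemma TT_1 (p : ℂ × ℂ) : TT p 1 = 2 * p.1.re := by
  simp [TT, Finset.Nat.antidiagonal_succ, phi_a0, phi_0b, ev, pt]; ring

lemma cheb_bound (T : ℕ → ℝ) (x : ℝ) (hx : |x| ≤ 1) (h0 : T 0 = 1) (h1 : T 1 = 2 * x)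
    (h : ∀ N, T (N+2) = 2 * x * T (N+1) - T N) (N : ℕ) : |T N| ≤ N + 1 := by
  have inv : ∀ N, T (N+1) ^ 2 - 2 * x * T (N+1) * T N + T N ^ 2 = 1 := by
    intro N
    induction N with
    | zero => rw [zero_add, h0, h1]; ring
    | succ n ih => rw [h n]; linear_combination ih
  have hx2 : x ^ 2 ≤ 1 := by rw [← sq_abs]; nlinarith [abs_nonneg x]
  induction N with
  | zero => simp [h0]
  | succ n ih =>
    have h3 : |T (n+1) - x * T n| ≤ 1 := by
      rw [← sq_le_one_iff_abs_le_one]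
      nlinarith [inv n, mul_nonneg (sub_nonneg.mpr hx2) (sq_nonneg (T n))]
    have h4 : |x * T n| ≤ n + 1 := by
      rw [abs_mul]; exact (mul_le_of_le_one_left (abs_nonneg _) hx).trans ih
    have h5 := abs_add_le (T (n+1) - x * T n) (x * T n)
    rw [sub_add_cancel] at h5
    push_cast; linarith

lemma cheb_gen (T : ℕ → ℝ) (x s : ℝ) (hx : |x| ≤ 1) (hs0 : 0 < s) (hs1 : s < 1) (h0 : T 0 = 1) (h1 : T 1 = 2 * x)
    (h : ∀ N, T (N+2) = 2 * x * T (N+1) - T N) :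
    Summable (fun N : ℕ => ((N:ℝ) + 1) * s ^ N * T N) ∧ (1 - s ^ 2) / 16 ≤ ∑' N : ℕ, ((N:ℝ) + 1) * s ^ N * T N := by
  have hb := cheb_bound T x hx h0 h1 h
  have hg : Summable (fun N : ℕ => ((N:ℝ) + 1) ^ 2 * s ^ N) := by
    have := (summable_nat_add_iff 1).mpr (summable_pow_mul_geometric_of_norm_lt_one 2 (r := s) (by
      rw [Real.norm_eq_abs, abs_of_pos hs0]; exact hs1))
    refine (this.mul_left s⁻¹).congr fun n => ?_
    push_cast
    rw [pow_succ]; field_simp; ring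
  have hB : Summable (fun N : ℕ => ((N:ℝ) + 1) * s ^ N * T N) := by
    refine Summable.of_norm_bounded hg fun N => ?_
    rw [Real.norm_eq_abs, abs_mul, abs_of_nonneg (by positivity)]
    calc _ ≤ ((N:ℝ) + 1) * s ^ N * (N + 1) := by gcongr; exact hb N
      _ = _ := by ring
  have hA : Summable (fun N : ℕ => s ^ N * T N) := by
    refine Summable.of_norm_bounded hg fun N => ?_
    rw [Real.norm_eq_abs, abs_mul, abs_of_nonneg (by positivity)]
    calc _ ≤ s ^ N * (N + 1) := by gcongr; exact hb N
      _ ≤ ((N:ℝ) + 1) ^ 2 * s ^ N := by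
        rw [mul_comm]; gcongr
        nlinarith [Nat.cast_nonneg (α := ℝ) N]
  refine ⟨hB, ?_⟩
  set A := ∑' N : ℕ, s ^ N * T N with hAd
  set B := ∑' N : ℕ, ((N:ℝ) + 1) * s ^ N * T N with hBd
  have A0 := hA.hasSum
  have A1 : HasSum (fun N : ℕ => s ^ (N+1) * T (N+1)) (A - 1) := by
    have := (hasSum_nat_add_iff' 1).mpr A0
    simpa [h0] using this
  have A2 : HasSum (fun N : ℕ => s ^ (N+2) * T (N+2)) (A - 1 - s * (2 * x)) := by
    have := (hasSum_nat_add_iff' 2).mpr A0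
    simpa [h0, h1, Finset.sum_range_succ, sub_sub] using this
  have B0 := hB.hasSum
  have B1 : HasSum (fun N : ℕ => (((N+1:ℕ):ℝ) + 1) * s ^ (N+1) * T (N+1)) (B - 1) := by
    have := (hasSum_nat_add_iff' 1).mpr B0
    simpa [h0] using this
  have B2 : HasSum (fun N : ℕ => (((N+2:ℕ):ℝ) + 1) * s ^ (N+2) * T (N+2)) (B - (1 + (1+1) * s * (2 * x))) := by
    have := (hasSum_nat_add_iff' 2).mpr B0
    simpa [h0, h1, Finset.sum_range_succ] using this
  have EA : A - 1 - s * (2 * x) = 2 * x * s * (A - 1) - s ^ 2 * A := by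
    refine A2.unique (((A1.mul_left (2*x*s)).sub (A0.mul_left (s^2))).congr_fun ?_)
    intro N; simp only [h]; ring
  have EB : B - (1 + (1+1) * s * (2 * x)) = 2 * x * s * (B - 1) + 2 * x * s * (A - 1) - (s ^ 2 * B + 2 * s ^ 2 * A) := by
    refine B2.unique ((((B1.mul_left (2*x*s)).add (A1.mul_left (2*x*s))).sub ((B0.mul_left (s^2)).add (A0.mul_left (2*s^2)))).congr_fun ?_)
    intro N; simp only [h]; push_cast; ring
  obtain ⟨hx1, hx2⟩ := abs_le.mp hx
  have hD1 : (1 - s) ^ 2 ≤ 1 - 2 * s * x + s ^ 2 := by nlinarith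
  have hD2 : 1 - 2 * s * x + s ^ 2 ≤ 4 := by nlinarith
  have hD0 : 0 < (1 - s) ^ 2 := by have : 0 < 1 - s := by linarith
                                   positivity
  have hE : (1 - 2 * s * x + s ^ 2) ^ 2 * B = 1 - s ^ 2 := by
    have e1 : (1 - 2 * s * x + s ^ 2) * A = 1 := by linear_combination EA
    have e2 : (1 - 2 * s * x + s ^ 2) * B = 1 + (2 * x * s - 2 * s ^ 2) * A := by linear_combination EB
    linear_combination (1 - 2 * s * x + s ^ 2) * e2 + (2 * x * s - 2 * s ^ 2) * e1
  have hDD : (1 - 2 * s * x + s ^ 2) ^ 2 ≤ 16 := by nlinarith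
  have hBn : 0 ≤ B := by
    by_contra hneg
    push Not at hneg
    have : (1 - 2 * s * x + s ^ 2) ^ 2 * B < 0 := mul_neg_of_pos_of_neg (by have : 0 < 1 - 2 * s * x + s ^ 2 := by linarith
                                                                            positivity) hneg
    nlinarith
  nlinarith [mul_le_mul_of_nonneg_right hDD hBn]

lemma init_pos (s : ℝ) (hs0 : 0 < s) (hs1 : s < 1) (j : ℕ) :
    ∃ F : Finset (ℕ × ℕ), (∀ i : ℕ × ℕ, i.1 + i.2 ≤ j → i ∈ F) ∧
      ∀ p ∈ S3, 0 < ev p (sol F (fun i => ((i.1:ℝ) + i.2 + 1) * s ^ (i.1 + i.2)) 0) := by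
  have hg : Summable (fun N : ℕ => ((N:ℝ) + 1) ^ 2 * s ^ N) := by
    have := (summable_nat_add_iff 1).mpr (summable_pow_mul_geometric_of_norm_lt_one 2 (r := s) (by
      rw [Real.norm_eq_abs, abs_of_pos hs0]; exact hs1))
    refine (this.mul_left s⁻¹).congr fun n => ?_
    push_cast
    rw [pow_succ]; field_simp; ring
  have hpos : 0 < (1 - s ^ 2) / 16 := by
    have : s ^ 2 < 1 := by nlinarith
    linarith
  have htail := tendsto_sum_nat_add (fun N : ℕ => ((N:ℝ) + 1) ^ 2 * s ^ N)
  obtain ⟨M, hM, hMj⟩ := ((htail.eventually (gt_mem_nhds hpos)).and (Filter.eventually_gt_atTop j)).exists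
  refine ⟨(Finset.range M).biUnion Finset.HasAntidiagonal.antidiagonal, ?_, ?_⟩
  · intro i hi
    simp; omega
  · intro p hp
    have hx : |p.1.re| ≤ 1 := (Complex.abs_re_le_norm _).trans (by simpa [pt] using pt_norm hp 0)
    obtain ⟨hS, hG⟩ := cheb_gen (TT p) p.1.re s hx hs0 hs1 (TT_0 p) (TT_1 p) (TT_rec hp)
    have hb := cheb_bound (TT p) p.1.re hx (TT_0 p) (TT_1 p) (TT_rec hp)
    have e : ev p (sol ((Finset.range M).biUnion Finset.HasAntidiagonal.antidiagonal) (fun i => ((i.1:ℝ) + i.2 + 1) * s ^ (i.1 + i.2)) 0) =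
        ∑ N ∈ Finset.range M, ((N:ℝ) + 1) * s ^ N * TT p N := by
      have := ev_sol ((Finset.range M).biUnion Finset.HasAntidiagonal.antidiagonal) (fun i => ((i.1:ℝ) + i.2 + 1) * s ^ (i.1 + i.2)) LinearMap.id p 0
      rw [LinearMap.id_apply] at this
      rw [this, Finset.sum_biUnion]
      · refine Finset.sum_congr rfl fun N _ => ?_
        rw [TT, Finset.mul_sum]
        refine Finset.sum_congr rfl fun i hi => ?_
        rw [Finset.HasAntidiagonal.mem_antidiagonal] at hi
        rw [← hi]; simp
      · intro a _ b _ hab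
        rw [Function.onFun, Finset.disjoint_left]
        intro i h1 h2
        rw [Finset.HasAntidiagonal.mem_antidiagonal] at h1 h2
        omega
    rw [e]
    have h1 := hS.sum_add_tsum_nat_add M
    have hS' := hS.comp_injective (add_left_injective M)
    have hg' := hg.comp_injective (add_left_injective M)
    have h2 := Summable.tsum_le_tsum (fun N => ?_) hS' hg'
    · simp only [Function.comp_def] at h2
      linarith
    · simp only [Function.comp_def]
      calc _ ≤ (((N + M : ℕ):ℝ) + 1) * s ^ (N + M) * ((N+M:ℕ) + 1) := by
            gcongr; exact (le_abs_self _).trans (hb _)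
        _ = _ := by ring


lemma approx : ∃ (F : ℕ → Finset (ℕ × ℕ)) (c : ℕ → ℕ × ℕ → ℝ),
    (∀ j, ∀ p ∈ S3, 0 < ev p (sol (F j) (c j) 0)) ∧
    ∀ D : SA →ₗ[ℂ] SA, Adm D → ∀ t : ℝ, 0 < t → ∀ p ∈ S3,
      Filter.Tendsto (fun j => ev p (D (sol (F j) (c j) t))) Filter.atTop (nhds (KK D t p)) := by
  set s : ℕ → ℝ := fun j => 1 - 1 / ((j:ℝ) + 2) with hs
  have hs1 : ∀ j, s j < 1 := fun j => by
    have : 0 < 1 / ((j:ℝ) + 2) := by positivity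
    simp only [hs]; linarith
  have hs0 : ∀ j, 0 < s j := fun j => by
    have : 1 / ((j:ℝ) + 2) < 1 := by
      rw [div_lt_one (by positivity)]; linarith [Nat.cast_nonneg (α := ℝ) j]
    simp only [hs]; linarith
  have hlim : Filter.Tendsto s Filter.atTop (nhds 1) := by
    have h1 : Filter.Tendsto (fun j : ℕ => 1 / ((j:ℝ) + 2)) Filter.atTop (nhds 0) := by
      have := (tendsto_one_div_add_atTop_nhds_zero_nat (𝕜 := ℝ)).comp (Filter.tendsto_add_atTop_nat 1)
      refine this.congr fun j => ?_
      simp only [Function.comp]; push_cast; ring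
    have h2 := h1.const_sub 1
    rw [sub_zero] at h2
    exact h2
  choose F hF hpos using fun j => init_pos (s j) (hs0 j) (hs1 j) j
  refine ⟨F, fun j i => ((i.1:ℝ) + i.2 + 1) * s j ^ (i.1 + i.2), hpos, ?_⟩
  intro D hD t ht p hp
  have e : ∀ j, ev p (D (sol (F j) (fun i => ((i.1:ℝ) + i.2 + 1) * s j ^ (i.1 + i.2)) t)) =
      ∑' i, (if i ∈ F j then s j ^ (i.1 + i.2) * ker D t p i else 0) := by
    intro j
    rw [ev_sol, tsum_eq_sum (s := F j) (fun i hi => by simp [hi])]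
    refine Finset.sum_congr rfl fun i hi => ?_
    simp only [hi, if_true, ker]; ring
  simp only [e]
  apply tendsto_tsum_of_dominated_convergence (bd_summable t ht)
  · intro i
    have h1 : Filter.Tendsto (fun j => s j ^ (i.1 + i.2) * ker D t p i) Filter.atTop (nhds (ker D t p i)) := by
      simpa using (hlim.pow (i.1 + i.2)).mul_const (ker D t p i)
    refine h1.congr' ?_
    filter_upwards [Filter.eventually_ge_atTop (i.1 + i.2)] with j hj
    simp [hF j i hj]
  · refine Filter.Eventually.of_forall fun j i => ?_
    have hb := ker_bound D hD le_rfl hp i (t := t)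
    have hb0 : 0 ≤ bd t i := (abs_nonneg _).trans hb
    split_ifs
    · rw [Real.norm_eq_abs, abs_mul, abs_of_nonneg (by have := hs0 j; positivity)]
      exact (mul_le_of_le_one_left (abs_nonneg _) (pow_le_one₀ (hs0 j).le (hs1 j).le)).trans hb
    · simpa using hb0

lemma dG_sol (F : Finset (ℕ × ℕ)) (c : ℕ × ℕ → ℝ) (t : ℝ) : dG (sol F c t) = 0 := by
  simp [sol, dG_phi]

lemma path_ev (r z τ : ℝ) (f : SA) :
    HasDerivAt (fun τ => ev (Pz (r * τ) (z * τ)) f)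
      (ev (Pz (r * τ) (z * τ)) (((r:ℂ) • (-dX) + (z:ℂ) • (dZ - (2:ℂ) • dG)) f)) τ := by
  have hr : HasDerivAt (fun τ : ℝ => r * τ) r τ := by simpa using (hasDerivAt_id τ).const_mul r
  have hz : HasDerivAt (fun τ : ℝ => z * τ) z τ := by simpa using (hasDerivAt_id τ).const_mul z
  have c1 := HasDerivAt.scomp τ (cos_cx 1 (r * τ)) hr
  have s1 := HasDerivAt.scomp τ (sin_cx 1 (r * τ)) hr
  have e1 := HasDerivAt.scomp τ (eiz_deriv (z * τ)) hz
  have e2 := HasDerivAt.scomp τ (eiz_deriv_neg (z * τ)) hz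
  have p1 : HasDerivAt (fun τ => (Pz (r * τ) (z * τ)).1) _ τ := ((c1.mul e1).congr_of_eventuallyEq
    (Filter.Eventually.of_forall fun τ => by simp [Pz]))
  have p2 : HasDerivAt (fun τ => (Pz (r * τ) (z * τ)).2) _ τ := ((s1.mul e2).congr_of_eventuallyEq
    (Filter.Eventually.of_forall fun τ => by simp [Pz]))
  apply ev_curve (fun τ => Pz (r * τ) (z * τ)) τ ((r:ℂ) • (-dX) + (z:ℂ) • (dZ - (2:ℂ) • dG)) _ _ p1 p2 <;>
  rw [Derivation.add_apply, Derivation.smul_apply, Derivation.smul_apply, map_add, MvPolynomial.smul_eval, MvPolynomial.smul_eval] <;>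
  simp [dX, dZ, dG, pt, Pz, MvPolynomial.mkDerivation_X, eiz_conj, MvPolynomial.smul_eval, -Complex.ofReal_cos, -Complex.ofReal_sin] <;> ring

lemma path_sol (F : Finset (ℕ × ℕ)) (c : ℕ × ℕ → ℝ) (r z a h τ : ℝ) :
    HasDerivAt (fun τ => ev (Pz (r * τ) (z * τ)) (sol F c (a + h * τ)))
      (-(r * ev (Pz (r * τ) (z * τ)) (dX (sol F c (a + h * τ)))) + z * ev (Pz (r * τ) (z * τ)) (dZ (sol F c (a + h * τ)))
        + h * ev (Pz (r * τ) (z * τ)) (opL (sol F c (a + h * τ)))) τ := by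
  set E := ((r:ℂ) • (-dX) + (z:ℂ) • (dZ - (2:ℂ) • dG)) with hE
  have hEs : ev (Pz (r * τ) (z * τ)) (E (sol F c (a + h * τ))) =
      -(r * ev (Pz (r * τ) (z * τ)) (dX (sol F c (a + h * τ)))) + z * ev (Pz (r * τ) (z * τ)) (dZ (sol F c (a + h * τ))) := by
    rw [hE, Derivation.add_apply, Derivation.smul_apply, Derivation.smul_apply, Derivation.sub_apply, Derivation.smul_apply,
      dG_sol, ev_add, ev_smul, ev_smul, smul_zero, sub_zero]
    have : ∀ f, ev (Pz (r * τ) (z * τ)) ((-dX) f) = - ev (Pz (r * τ) (z * τ)) (dX f) := by intro f; simp [ev]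
    rw [this]; ring
  rw [← hEs]
  have i1 := fun τ => ev_sol F c LinearMap.id (Pz (r * τ) (z * τ)) (a + h * τ)
  have i2 := ev_sol F c E.toLinearMap (Pz (r * τ) (z * τ)) (a + h * τ)
  have i3 := ev_opL_sol F c LinearMap.id (Pz (r * τ) (z * τ)) (a + h * τ)
  simp only [LinearMap.id_apply] at i1 i3
  change ev (Pz (r * τ) (z * τ)) (E (sol F c (a + h * τ))) = _ at i2
  rw [i2, i3, Finset.mul_sum, ← Finset.sum_add_distrib]
  simp only [i1]
  apply HasDerivAt.fun_sum
  intro i _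
  have h1 : HasDerivAt (fun τ : ℝ => Real.exp (-lam i * (a + h * τ))) (Real.exp (-lam i * (a + h * τ)) * (-lam i * (h * 1))) τ :=
    ((((hasDerivAt_id τ).const_mul h).const_add a).const_mul (-lam i)).exp
  refine ((h1.const_mul (c i)).fun_mul (path_ev r z τ (phi i.1 i.2))).congr_deriv ?_
  change _ = _ * ev (Pz (r * τ) (z * τ)) (E (phi i.1 i.2)) + _
  rw [hE]
  ring

lemma harnack (F : Finset (ℕ × ℕ)) (c : ℕ × ℕ → ℝ) (hp : ∀ p ∈ S3, 0 < ev p (sol F c 0)) (t r z : ℝ) (ht : 0 < t) :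
    ev (Pz 0 0) (sol F c (t/2)) ≤ Real.exp (4 + 2 * r ^ 2 / t + 3 * z ^ 2 / t ^ 2) * ev (Pz r z) (sol F c t) := by
  set K := 4 + 2 * r ^ 2 / t + 3 * z ^ 2 / t ^ 2 with hK
  set g : ℝ → ℝ := fun τ => ev (Pz (r * τ) (z * τ)) (sol F c (t/2 + t/2 * τ)) with hg
  have hd : ∀ τ, HasDerivAt (fun τ => Real.exp (K * τ) * g τ) _ τ := fun τ =>
    (((hasDerivAt_id τ).const_mul K).exp).fun_mul (path_sol F c r z (t/2) (t/2) τ)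
  have hm : MonotoneOn (fun τ => Real.exp (K * τ) * g τ) (Set.Icc 0 1) := by
    apply monotoneOn_of_deriv_nonneg (convex_Icc 0 1)
    · exact fun τ _ => (hd τ).continuousAt.continuousWithinAt
    · exact fun τ _ => (hd τ).differentiableAt.differentiableWithinAt
    · intro τ hτ
      rw [interior_Icc] at hτ
      rw [(hd τ).deriv]
      have hθ : 0 < t/2 + t/2 * τ := by have := hτ.1; positivity
      have hθ1 : t / 2 ≤ t/2 + t/2 * τ := by have := hτ.1; have : 0 ≤ t/2 * τ := by positivity
                                             linarith
      have hmem := Pz_mem (r * τ) (z * τ)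
      have hu := sol_pos F c hp (t/2 + t/2 * τ) hθ.le _ hmem
      have hly := liYau F c hp 3 0 (by norm_num) (by norm_num) (t/2 + t/2 * τ) hθ _ hmem
      simp only [id, hg]
      generalize t/2 + t/2 * τ = θ at *
      generalize Pz (r * τ) (z * τ) = p at *
      set u := ev p (sol F c θ)
      set X := ev p (dX (sol F c θ))
      set Y := ev p (dY (sol F c θ))
      set Z := ev p (dZ (sol F c θ))
      set l := ev p (opL (sol F c θ))
      have h1 : (3 * (3:ℝ) - 1) ^ 2 / (4 * (3 - 2) * θ) ≤ 32 / t := by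
        rw [div_le_div_iff₀ (by positivity) ht]; nlinarith
      have h2 : 4 * (t/2) / 3 * Z ^ 2 ≤ 4 * θ / 3 * Z ^ 2 := by gcongr
      have h3 : X ^ 2 + 2 * t / 3 * Z ^ 2 ≤ 4 * l * u + 32 / t * u ^ 2 := by
        have h4 := mul_le_mul_of_nonneg_right h1 (sq_nonneg u)
        norm_num at hly h4 h1
        nlinarith [sq_nonneg Y]
      have h5 : 0 ≤ u * (K * u + (-(r * X) + z * Z + t / 2 * l)) := by
        have h6 : t / 8 * (X ^ 2 + 2 * t / 3 * Z ^ 2) ≤ t / 8 * (4 * l * u + 32 / t * u ^ 2) := by gcongr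
        have h7 : t / 8 * (4 * l * u + 32 / t * u ^ 2) = t / 2 * l * u + 4 * u ^ 2 := by field_simp; ring
        have h8 : 0 ≤ t / 8 * (X - 4 * r * u / t) ^ 2 + t ^ 2 / 12 * (Z + 6 * z * u / t ^ 2) ^ 2 := by positivity
        have h9 : t / 8 * (X - 4 * r * u / t) ^ 2 + t ^ 2 / 12 * (Z + 6 * z * u / t ^ 2) ^ 2 =
          t / 8 * (X ^ 2 + 2 * t / 3 * Z ^ 2) - r * X * u + z * Z * u + (2 * r ^ 2 / t + 3 * z ^ 2 / t ^ 2) * u ^ 2 := by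
          field_simp; ring
        rw [hK]
        nlinarith
      have h10 := nonneg_of_mul_nonneg_right h5 hu
      have : Real.exp (K * τ) * (K * 1) * u + Real.exp (K * τ) * (-(r * X) + z * Z + t / 2 * l) =
        Real.exp (K * τ) * (K * u + (-(r * X) + z * Z + t / 2 * l)) := by ring
      rw [this]
      positivity
  have := hm (Set.left_mem_Icc.mpr zero_le_one) (Set.right_mem_Icc.mpr zero_le_one) zero_le_one
  simpa [hg] using this

lemma phi_one (a b : ℕ) : MvPolynomial.eval (pt (Pz 0 0)) (phi a b) = 1 := by
  have h := rho_S3 (Pz_mem 0 0)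
  revert a b
  apply phi_induction
  · intro a; simp [phi_a0, pt, Pz, eiz]
  · intro a; simp [phi_0b, pt, Pz, eiz]
  · intro a b h1 h2 h3
    rw [phi_ss, map_sub, map_add, map_mul, map_mul, map_mul, h1, h2, h3, h]
    simp [pt, Pz, eiz]

lemma KK_pos (t r z : ℝ) (ht : 0 < t) : 0 < KK LinearMap.id t (Pz r z) := by
  have h0 : 0 < KK LinearMap.id (t/2) (Pz 0 0) := by
    have hk : ∀ i, 0 < ker LinearMap.id (t/2) (Pz 0 0) i := by
      intro i
      simp only [ker, LinearMap.id_apply, ev, phi_one, Complex.one_re]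
      positivity
    exact (ker_summable _ adm_id (half_pos ht) (Pz_mem 0 0)).tsum_pos (fun i => (hk i).le) (0,0) (hk _)
  obtain ⟨F, c, hp, hl⟩ := approx
  have l1 := hl _ adm_id (t/2) (half_pos ht) _ (Pz_mem 0 0)
  have l2 := hl _ adm_id t ht _ (Pz_mem r z)
  have := le_of_tendsto_of_tendsto' l1 (l2.const_mul (Real.exp (4 + 2 * r ^ 2 / t + 3 * z ^ 2 / t ^ 2)))
    (fun j => harnack (F j) (c j) (hp j) t r z ht)
  exact pos_of_mul_pos_right (h0.trans_le this) (Real.exp_pos _).le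

lemma KK_liYau (α t r z : ℝ) (hα : 2 < α) (ht : 0 < t) (hs : Real.sin r ≠ 0) (hc : Real.cos r ≠ 0) :
    KK dX.toLinearMap t (Pz r z) ^ 2 + (-Real.tan r * KK dZ.toLinearMap t (Pz r z)) ^ 2 +
      4 * t / α * KK dZ.toLinearMap t (Pz r z) ^ 2 ≤
      ((3 * α - 1) / (α - 1) - 2 * t / α) * KK opLl t (Pz r z) * KK LinearMap.id t (Pz r z) +
      (2 ^ 2 * t / (4 * α) - 2 * ((3 * α - 1) / (α - 1)) / 2 + (3 * α - 1) ^ 2 / (4 * (α - 2) * t)) *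
        KK LinearMap.id t (Pz r z) ^ 2 := by
  obtain ⟨F, c, hp, hl⟩ := approx
  have hm := Pz_mem r z
  have l0 := hl _ adm_id t ht _ hm
  have lX := hl _ adm_X t ht _ hm
  have lZ := hl _ adm_Z t ht _ hm
  have lL := hl _ adm_L t ht _ hm
  refine le_of_tendsto_of_tendsto' (((lX.pow 2).add ((lZ.const_mul (-Real.tan r)).pow 2)).add ((lZ.pow 2).const_mul (4 * t / α)))
    (((lL.const_mul ((3 * α - 1) / (α - 1) - 2 * t / α)).mul l0).add ((l0.pow 2).const_mul _)) (fun j => ?_)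
  have := liYau (F j) (c j) (hp j) α 2 hα (by norm_num) t ht _ hm
  rw [Pz_Y r z hs hc _ (dG_sol _ _ _)] at this
  exact this

theorem stmt_17 (α : ℝ) (hα : 2 < α) (t : ℝ) (ht : 0 < t)
    (r : ℝ) (hr : r ∈ Set.Ioo 0 (Real.pi / 2)) (z : ℝ)
    (hz : z ∈ Set.Ioo (-Real.pi) Real.pi) :
    0 < heatP t r z ∧
      (deriv (fun r' => heatP t r' z) r / heatP t r z) ^ 2 +
          Real.tan r ^ 2 * (deriv (fun z' => heatP t r z') z / heatP t r z) ^ 2 +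
          (t / α) * (deriv (fun z' => heatP t r z') z / heatP t r z) ^ 2
        ≤ ((3 * α - 1) / (α - 1) - 2 * t / α) *
              (deriv (fun t' => heatP t' r z) t / heatP t r z) +
            t / α - (3 * α - 1) / (α - 1) + (3 * α - 1) ^ 2 / ((α - 2) * t) := by
  have hcpos : 0 < Real.cos r := Real.cos_pos_of_mem_Ioo ⟨by linarith [hr.1, Real.pi_pos], hr.2⟩
  have hspos : 0 < Real.sin r := Real.sin_pos_of_pos_of_lt_pi hr.1 (by linarith [hr.2, Real.pi_pos])
  have dr : deriv (fun r' => heatP t r' z) r = -KK dX.toLinearMap t (Pz r z) := by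
    refine HasDerivAt.deriv ((KK_r ht r z).congr_of_eventuallyEq ?_)
    have : ∀ᶠ r' in nhds r, Real.cos r' ≠ 0 := Real.continuous_cos.continuousAt.eventually_ne hcpos.ne'
    filter_upwards [this] with r' h
    exact heatP_eq t r' z ht h
  have dz : deriv (fun z' => heatP t r z') z = KK dZ.toLinearMap t (Pz r z) := by
    refine HasDerivAt.deriv ((KK_z ht r z).congr_of_eventuallyEq ?_)
    exact Filter.Eventually.of_forall fun z' => heatP_eq t r z' ht hcpos.ne'
  have dt : deriv (fun t' => heatP t' r z) t = KK opLl t (Pz r z) := by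
    refine HasDerivAt.deriv ((KK_t ht (Pz_mem r z)).congr_of_eventuallyEq ?_)
    filter_upwards [lt_mem_nhds ht] with t' h
    exact heatP_eq t' r z h hcpos.ne'
  have hu := KK_pos t r z ht
  have hly := KK_liYau α t r z hα ht hspos.ne' hcpos.ne'
  rw [dr, dz, dt, heatP_eq t r z ht hcpos.ne']
  refine ⟨hu, ?_⟩
  generalize KK LinearMap.id t (Pz r z) = u at *
  generalize KK dX.toLinearMap t (Pz r z) = X at *
  generalize KK dZ.toLinearMap t (Pz r z) = Z at *
  generalize KK opLl t (Pz r z) = l at *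
  generalize Real.tan r = T at *
  have hα2 : 0 < α - 2 := by linarith
  have hα0 : 0 < α := by linarith
  have e1 : (2:ℝ) ^ 2 * t / (4 * α) = t / α := by field_simp; norm_num
  have e2 : (3 * α - 1) ^ 2 / (4 * (α - 2) * t) ≤ (3 * α - 1) ^ 2 / ((α - 2) * t) := by
    apply div_le_div_of_nonneg_left (by positivity) (by positivity)
    nlinarith [mul_pos hα2 ht]
  have e3 : t / α * Z ^ 2 ≤ 4 * t / α * Z ^ 2 := by
    gcongr; linarith
  rw [e1] at hly
  have e4 := mul_le_mul_of_nonneg_right e2 (sq_nonneg u)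
  generalize (3 * α - 1) ^ 2 / (4 * (α - 2) * t) = C1 at *
  generalize (3 * α - 1) ^ 2 / ((α - 2) * t) = C2 at *
  generalize (3 * α - 1) / (α - 1) = C3 at *
  have main : X ^ 2 + T ^ 2 * Z ^ 2 + t / α * Z ^ 2 ≤ (C3 - 2 * t / α) * l * u + (t / α - C3 + C2) * u ^ 2 := by
    nlinarith
  have : (C3 - 2 * t / α) * (l / u) + t / α - C3 + C2 - ((-X / u) ^ 2 + T ^ 2 * (Z / u) ^ 2 + t / α * (Z / u) ^ 2) =
      ((C3 - 2 * t / α) * l * u + (t / α - C3 + C2) * u ^ 2 - (X ^ 2 + T ^ 2 * Z ^ 2 + t / α * Z ^ 2)) / u ^ 2 := by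
    field_simp
    ring
  have h2 : 0 ≤ ((C3 - 2 * t / α) * l * u + (t / α - C3 + C2) * u ^ 2 - (X ^ 2 + T ^ 2 * Z ^ 2 + t / α * Z ^ 2)) / u ^ 2 :=
    div_nonneg (by linarith) (sq_nonneg u)
  linarith
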